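/- Let q = p^f be a power of a prime p, let n ≥ 3 and suppose GU_n(q) is not solvable. Let π be a set of primes with 2 ∈ π, 3 ∉ π and p ∉ π, and let H be a solvable Hall π-subgroup of GU_n(q). Set G = H·SU_n(q). Then there exist x, y, z ∈ G such that H ∩ H^x ∩ H^y ∩ H^z is contained in the center Z(GU_n(q)), i.e. consists of scalar matrices. -/

import Mathlib

open Matrix Pointwise

/-- `H^x = x⁻¹ H x`. -/
def conjBy {G : Type*} [Group G] (H : Subgroup G) (x : G) : Subgroup G :=
  Subgroup.map ((MulAut.conj x⁻¹).toMonoidHom) H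

/-- Hall π-subgroup of the whole group. -/
def IsHallSubgroup {G : Type*} [Group G] (π : Set ℕ) (H : Subgroup G) : Prop :=
  (∀ r : ℕ, r.Prime → r ∣ Nat.card H → r ∈ π) ∧ ∀ r ∈ π, ¬ r ∣ H.index

/-- Hall π-subgroup of the subgroup `K`. -/
def IsHallSubgroupIn {G : Type*} [Group G] (π : Set ℕ) (K H : Subgroup G) : Prop :=
  H ≤ K ∧ (∀ r : ℕ, r.Prime → r ∣ Nat.card H → r ∈ π) ∧ ∀ r ∈ π, ¬ r ∣ H.relIndex K

/-- The subgroup `SL_n` of `GL_n`. -/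
def SLsub (n : ℕ) (F : Type*) [Field F] : Subgroup (GL (Fin n) F) where
  carrier := {g | Matrix.det (g : Matrix (Fin n) (Fin n) F) = 1}
  one_mem' := by simp
  mul_mem' := by
    intro a b ha hb
    simp only [Set.mem_setOf_eq, Units.val_mul, Matrix.det_mul] at *
    rw [ha, hb, one_mul]
  inv_mem' := by
    intro g hg
    simp only [Set.mem_setOf_eq] at *
    have h1 : ((g⁻¹ : GL (Fin n) F) : Matrix (Fin n) (Fin n) F) *
        (g : Matrix (Fin n) (Fin n) F) = 1 := g.inv_mul
    have := congrArg Matrix.det h1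
    rw [Matrix.det_mul, Matrix.det_one, hg, mul_one] at this
    exact this

/-- The group of similitudes of the bilinear form `B` (acting on row vectors). -/
def similitudeGroup {n : ℕ} {F : Type*} [Field F]
    (B : (Fin n → F) → (Fin n → F) → F) : Subgroup (GL (Fin n) F) where
  carrier := {g | ∃ c : Fˣ, ∀ u v : Fin n → F,
    B (Matrix.vecMul u (g : Matrix (Fin n) (Fin n) F))
      (Matrix.vecMul v (g : Matrix (Fin n) (Fin n) F)) = (c : F) * B u v}
  one_mem' := ⟨1, by simp⟩
  mul_mem' := by
    rintro a b ⟨c, hc⟩ ⟨d, hd⟩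
    refine ⟨c * d, fun u v => ?_⟩
    simp only [Units.val_mul, ← Matrix.vecMul_vecMul, hd, hc]
    ring
  inv_mem' := by
    rintro g ⟨c, hc⟩
    refine ⟨c⁻¹, fun u v => ?_⟩
    have h1 : ∀ w : Fin n → F, Matrix.vecMul
        (Matrix.vecMul w ((g⁻¹ : GL (Fin n) F) : Matrix (Fin n) (Fin n) F))
        (g : Matrix (Fin n) (Fin n) F) = w := by
      intro w
      rw [Matrix.vecMul_vecMul, g.inv_mul, Matrix.vecMul_one]
    have h2 := hc (Matrix.vecMul u ((g⁻¹ : GL (Fin n) F) : Matrix (Fin n) (Fin n) F))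
      (Matrix.vecMul v ((g⁻¹ : GL (Fin n) F) : Matrix (Fin n) (Fin n) F))
    rw [h1, h1] at h2
    rw [h2, Units.val_inv_eq_inv_val, inv_mul_cancel_left₀ (by exact_mod_cast c.ne_zero)]

/-- The isometry group of the bilinear form `B` (acting on row vectors). -/
def isometryGroup {n : ℕ} {F : Type*} [Field F]
    (B : (Fin n → F) → (Fin n → F) → F) : Subgroup (GL (Fin n) F) where
  carrier := {g | ∀ u v : Fin n → F,
    B (Matrix.vecMul u (g : Matrix (Fin n) (Fin n) F))
      (Matrix.vecMul v (g : Matrix (Fin n) (Fin n) F)) = B u v}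
  one_mem' := by simp
  mul_mem' := by
    intro a b ha hb u v
    simp only [Set.mem_setOf_eq] at ha hb
    simp only [Units.val_mul, ← Matrix.vecMul_vecMul]
    rw [hb, ha]
  inv_mem' := by
    intro g hg u v
    have h1 : ∀ w : Fin n → F, Matrix.vecMul
        (Matrix.vecMul w ((g⁻¹ : GL (Fin n) F) : Matrix (Fin n) (Fin n) F))
        (g : Matrix (Fin n) (Fin n) F) = w := by
      intro w
      rw [Matrix.vecMul_vecMul, g.inv_mul, Matrix.vecMul_one]
    have h2 := hg (Matrix.vecMul u ((g⁻¹ : GL (Fin n) F) : Matrix (Fin n) (Fin n) F))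
      (Matrix.vecMul v ((g⁻¹ : GL (Fin n) F) : Matrix (Fin n) (Fin n) F))
    rw [h1, h1] at h2
    exact h2.symm

/-- The group of similitudes of the quadratic form `Q` (acting on row vectors). -/
def qSimilitudeGroup {n : ℕ} {F : Type*} [Field F]
    (Q : (Fin n → F) → F) : Subgroup (GL (Fin n) F) where
  carrier := {g | ∃ c : Fˣ, ∀ v : Fin n → F,
    Q (Matrix.vecMul v (g : Matrix (Fin n) (Fin n) F)) = (c : F) * Q v}
  one_mem' := ⟨1, by simp⟩
  mul_mem' := by
    rintro a b ⟨c, hc⟩ ⟨d, hd⟩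
    refine ⟨c * d, fun v => ?_⟩
    simp only [Units.val_mul, ← Matrix.vecMul_vecMul, hd, hc]
    ring
  inv_mem' := by
    rintro g ⟨c, hc⟩
    refine ⟨c⁻¹, fun v => ?_⟩
    have h1 : ∀ w : Fin n → F, Matrix.vecMul
        (Matrix.vecMul w ((g⁻¹ : GL (Fin n) F) : Matrix (Fin n) (Fin n) F))
        (g : Matrix (Fin n) (Fin n) F) = w := by
      intro w
      rw [Matrix.vecMul_vecMul, g.inv_mul, Matrix.vecMul_one]
    have h2 := hc (Matrix.vecMul v ((g⁻¹ : GL (Fin n) F) : Matrix (Fin n) (Fin n) F))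
    rw [h1] at h2
    rw [h2, Units.val_inv_eq_inv_val, inv_mul_cancel_left₀ (by exact_mod_cast c.ne_zero)]

/-- The unitary group `GU_n` with respect to the field automorphism `φ`. -/
def GUgrp (n : ℕ) {K : Type*} [Field K] (φ : K →+* K) : Subgroup (GL (Fin n) K) where
  carrier := {g | ((g : Matrix (Fin n) (Fin n) K).map φ)ᵀ * (g : Matrix (Fin n) (Fin n) K) = 1}
  one_mem' := by
    simp [Matrix.map_one φ φ.map_zero φ.map_one]
  mul_mem' := by
    intro a b ha hb
    simp only [Set.mem_setOf_eq, Units.val_mul, Matrix.map_mul, Matrix.transpose_mul] at *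
    calc ((b : Matrix (Fin n) (Fin n) K).map φ)ᵀ * ((a : Matrix (Fin n) (Fin n) K).map φ)ᵀ *
          ((a : Matrix (Fin n) (Fin n) K) * (b : Matrix (Fin n) (Fin n) K))
        = ((b : Matrix (Fin n) (Fin n) K).map φ)ᵀ *
          (((a : Matrix (Fin n) (Fin n) K).map φ)ᵀ * (a : Matrix (Fin n) (Fin n) K)) *
          (b : Matrix (Fin n) (Fin n) K) := by noncomm_ring
      _ = 1 := by rw [ha, mul_one, hb]
  inv_mem' := by
    intro g hg
    simp only [Set.mem_setOf_eq] at *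
    have hcomm : (g : Matrix (Fin n) (Fin n) K) * ((g : Matrix (Fin n) (Fin n) K).map φ)ᵀ = 1 :=
      mul_eq_one_comm.mp hg
    have h1 : ((g : Matrix (Fin n) (Fin n) K) * ((g⁻¹ : GL (Fin n) K) : Matrix (Fin n) (Fin n) K)).map φ = 1 := by
      rw [g.mul_inv]
      exact Matrix.map_one φ φ.map_zero φ.map_one
    rw [Matrix.map_mul] at h1
    have h2 := congrArg Matrix.transpose h1
    rw [Matrix.transpose_mul, Matrix.transpose_one] at h2
    calc (((g⁻¹ : GL (Fin n) K) : Matrix (Fin n) (Fin n) K).map φ)ᵀ *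
          ((g⁻¹ : GL (Fin n) K) : Matrix (Fin n) (Fin n) K)
        = (((g⁻¹ : GL (Fin n) K) : Matrix (Fin n) (Fin n) K).map φ)ᵀ *
          (((g : Matrix (Fin n) (Fin n) K).map φ)ᵀ * (g : Matrix (Fin n) (Fin n) K)) *
          ((g⁻¹ : GL (Fin n) K) : Matrix (Fin n) (Fin n) K) := by rw [hg, mul_one]
      _ = ((((g⁻¹ : GL (Fin n) K) : Matrix (Fin n) (Fin n) K).map φ)ᵀ *
          ((g : Matrix (Fin n) (Fin n) K).map φ)ᵀ) *
          ((g : Matrix (Fin n) (Fin n) K) * ((g⁻¹ : GL (Fin n) K) : Matrix (Fin n) (Fin n) K)) := by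
            noncomm_ring
      _ = 1 := by rw [h2, g.mul_inv, mul_one]

/-!
After conjugation `H` contains the `2`-group of signed permutations preserving the pairs `{0, 1}`,
`{2, 3}`, …, because this group consists of unitary matrices and `H` has odd index. Hence `H`
contains the reflections in `e_i` and in `e_i - e_j` for every pair `{i, j}`.

Suppose that `H` contained reflections with linearly independent roots `x`, `y`, `z` such that `x`
and `z` are orthogonal to each other but not to `y`. Either their product is a transvection on the
span of the roots, so that `p ∣ |H|`, or the span is an irreducible representation of degree `3` of
a solvable subgroup of `H`, and then Clifford theory gives `3 ∣ |H|`. Both are excluded. It follows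
that every root of `H` of the form `h e_i` is supported on a single pair, so `H` permutes the
pairs.

A cyclic shift of the basis conjugates `H` into a group permuting the shifted pairs, so an element
common to both is monomial. Two further conjugations, by unitary matrices that fix one basis
vector and spread another one over the remaining coordinates, leave only scalar matrices.
-/

section Clifford

variable {K V G : Type*} [Field K] [AddCommGroup V] [Module K V] [Group G]
  (ρ : Representation K G V)

theorem eq_top_of_apply_mem [ρ.IsIrreducible] {S : Submodule K V} (hS : S ≠ ⊥)
    (hinv : ∀ g, ∀ v ∈ S, ρ g v ∈ S) : S = ⊤ := by
  let S' : Subrepresentation ρ := ⟨S, fun g v hv => hinv g v hv⟩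
  have htop : S' = ⊤ := (eq_bot_or_eq_top S').resolve_left fun h =>
    hS (congrArg Subrepresentation.toSubmodule h)
  exact congrArg Subrepresentation.toSubmodule htop

/-- The simultaneous eigenspace of the operators `ρ a`, `a ∈ A`, with eigenvalues `χ a`. The
weight `χ` is an arbitrary function, so that no structure on `A` enters. -/
def weightSpace (A : Subgroup G) (χ : A → K) : Submodule K V :=
  ⨅ a : A, Module.End.eigenspace (ρ a) (χ a)

variable {ρ}

theorem mem_weightSpace {A : Subgroup G} {χ : A → K} {v : V} :
    v ∈ weightSpace ρ A χ ↔ ∀ a : A, ρ a v = χ a • v := by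
  simp only [weightSpace, Submodule.mem_iInf, Module.End.mem_eigenspace_iff]

theorem iSupIndep_weightSpace {A : Subgroup G} (hcomm : ∀ a ∈ A, ∀ b ∈ A, Commute (ρ a) (ρ b)) :
    iSupIndep (weightSpace ρ A) :=
  (Module.End.independent_iInf_maxGenEigenspace_of_forall_mapsTo (fun a : A => ρ a)
    fun a b c => Module.End.mapsTo_maxGenEigenspace_of_comm (hcomm b b.2 a a.2) c).mono
    fun χ => iInf_mono fun a => (Module.End.genEigenspace (ρ a) (χ a)).monotone le_top

attribute [local instance] arrowAction

theorem apply_mem_weightSpace_smul {A : Subgroup G} [A.Normal] (g : G) {χ : A → K} {v : V}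
    (hv : v ∈ weightSpace ρ A χ) : ρ g v ∈ weightSpace ρ A (ConjAct.toConjAct g • χ) := by
  rw [mem_weightSpace] at hv ⊢
  intro a
  have ha : (a : G) * g = g * ((ConjAct.toConjAct g)⁻¹ • a : A) := by
    rw [ConjAct.Subgroup.val_conj_smul, ConjAct.smul_def]
    simp [mul_assoc]
  calc ρ a (ρ g v) = ρ g (ρ ((ConjAct.toConjAct g)⁻¹ • a : A) v) := by
        rw [← Module.End.mul_apply, ← map_mul, ha, map_mul, Module.End.mul_apply]
    _ = (ConjAct.toConjAct g • χ) a • ρ g v := by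
        rw [hv, map_smul]
        rfl

theorem finrank_weightSpace_smul {A : Subgroup G} [A.Normal] (g : G) (χ : A → K) :
    Module.finrank K (weightSpace ρ A (ConjAct.toConjAct g • χ)) =
      Module.finrank K (weightSpace ρ A χ) := by
  have hmap : (weightSpace ρ A χ).map (ρ g) = weightSpace ρ A (ConjAct.toConjAct g • χ) := by
    refine le_antisymm ?_ fun v hv => ⟨ρ g⁻¹ v, ?_, ρ.self_inv_apply g v⟩
    · rintro _ ⟨v, hv, rfl⟩
      exact apply_mem_weightSpace_smul g hv
    · simpa using apply_mem_weightSpace_smul g⁻¹ hv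
  rw [← hmap]
  exact (Submodule.equivMapOfInjective (ρ g)
    (Function.LeftInverse.injective (ρ.inv_self_apply g)) _).finrank_eq.symm

theorem iSup_weightSpace_orbit_eq_top [ρ.IsIrreducible] {A : Subgroup G} [A.Normal] {χ : A → K}
    (hχ : weightSpace ρ A χ ≠ ⊥) :
    ⨆ ψ : MulAction.orbit (ConjAct G) χ, weightSpace ρ A ψ = ⊤ := by
  refine eq_top_of_apply_mem ρ (fun h => hχ (eq_bot_iff.2 ?_)) fun g v hv => ?_
  · exact h ▸ le_iSup (fun ψ : MulAction.orbit (ConjAct G) χ => weightSpace ρ A ψ)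
      ⟨χ, MulAction.mem_orbit_self χ⟩
  · have hle : ⨆ ψ : MulAction.orbit (ConjAct G) χ, weightSpace ρ A ψ ≤
        (⨆ ψ : MulAction.orbit (ConjAct G) χ, weightSpace ρ A ψ).comap (ρ g) :=
      iSup_le fun ψ w hw => Submodule.mem_iSup_of_mem (ConjAct.toConjAct g • ψ)
        (apply_mem_weightSpace_smul g hw)
    exact hle hv

theorem exists_index_mul_finrank_weightSpace [FiniteDimensional K V] [ρ.IsIrreducible]
    {A : Subgroup G} [A.Normal] (hcomm : ∀ a ∈ A, ∀ b ∈ A, Commute (ρ a) (ρ b)) {χ : A → K}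
    (hχ : weightSpace ρ A χ ≠ ⊥) :
    ∃ S : Subgroup G, S.index * Module.finrank K (weightSpace ρ A χ) = Module.finrank K V := by
  classical
  let F : MulAction.orbit (ConjAct G) χ → Submodule K V := fun ψ => weightSpace ρ A ψ
  have hind : iSupIndep F := (iSupIndep_weightSpace hcomm).comp Subtype.val_injective
  have hrank : ∀ ψ, Module.finrank K (F ψ) = Module.finrank K (weightSpace ρ A χ) := by
    rintro ⟨_, g, rfl⟩
    exact finrank_weightSpace_smul (ConjAct.ofConjAct g) χ
  have hfin : Finite (MulAction.orbit (ConjAct G) χ) :=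
    WellFoundedGT.finite_of_iSupIndep hind fun ψ h => hχ <| by
      rw [← Submodule.finrank_eq_zero, ← hrank ψ, h, finrank_bot]
  have := Fintype.ofFinite (MulAction.orbit (ConjAct G) χ)
  have hint := DirectSum.isInternal_submodule_of_iSupIndep_of_iSup_eq_top hind
    (iSup_weightSpace_orbit_eq_top hχ)
  refine ⟨MulAction.stabilizer (ConjAct G) χ, ?_⟩
  rw [← (LinearEquiv.ofBijective (DirectSum.coeLinearMap F) hint).finrank_eq,
    Module.finrank_directSum, Finset.sum_congr rfl fun ψ _ => hrank ψ, Finset.sum_const,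
    smul_eq_mul, Finset.card_univ]
  congr 1
  rw [← Nat.card_eq_fintype_card, Nat.card_coe_set_eq]
  exact MulAction.index_stabilizer (ConjAct G) χ

theorem dvd_card_of_commute_of_prime_finrank [ρ.IsIrreducible] {ℓ : ℕ} (hℓ : ℓ.Prime)
    (hV : Module.finrank K V = ℓ) {A : Subgroup G} [A.Normal]
    (hcomm : ∀ a ∈ A, ∀ b ∈ A, Commute (ρ a) (ρ b)) {a : G} (ha : a ∈ A)
    (hns : ∀ c : K, ρ a ≠ c • 1) {v : V} (hv : v ≠ 0) (hline : ∀ a ∈ A, ∃ c : K, ρ a v = c • v) :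
    ℓ ∣ Nat.card G := by
  have : FiniteDimensional K V := Module.finite_of_finrank_pos (hV ▸ hℓ.pos)
  choose χ hχ using fun a : A => hline a a.2
  have hmem : v ∈ weightSpace ρ A χ := mem_weightSpace.2 hχ
  obtain ⟨S, hS⟩ := exists_index_mul_finrank_weightSpace hcomm (Submodule.ne_bot_iff _ |>.2
    ⟨v, hmem, hv⟩)
  rw [hV] at hS
  rcases (Nat.dvd_prime hℓ).1 ⟨_, hS.symm⟩ with h1 | hidx
  · rw [h1, one_mul, ← hV] at hS
    have htop := Submodule.eq_top_of_finrank_eq hS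
    refine absurd (LinearMap.ext fun w => ?_) (hns (χ ⟨a, ha⟩))
    have hw : w ∈ weightSpace ρ A χ := htop ▸ Submodule.mem_top
    exact mem_weightSpace.1 hw ⟨a, ha⟩
  · exact hidx ▸ S.index_dvd_card

end Clifford

section SolvableRankThree

variable {K V G : Type*} [Field K] [AddCommGroup V] [Module K V] [Group G]
  {ρ : Representation K G V}

theorem exists_not_scalar [ρ.IsIrreducible] (hV : Module.finrank K V ≠ 1) :
    ∃ g, ∀ c : K, ρ g ≠ c • 1 := by
  by_contra! hsc
  obtain ⟨v, hv⟩ : ∃ v : V, v ≠ 0 := by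
    by_contra! h0
    exact bot_ne_top (α := Subrepresentation ρ) (SetLike.ext fun v => by
      rw [h0 v]
      exact iff_of_true (zero_mem (⊥ : Submodule K V)) (zero_mem (⊤ : Submodule K V)))
  have htop : K ∙ v = ⊤ := eq_top_of_apply_mem ρ (by simpa using hv) fun g w hw => by
    obtain ⟨c, hc⟩ := hsc g
    rw [hc]
    exact (K ∙ v).smul_mem c hw
  exact hV (by rw [← finrank_top K V, ← htop, finrank_span_singleton hv])

theorem exists_derivedSeries_not_scalar [Group.IsSolvable G] [ρ.IsIrreducible]
    (hV : Module.finrank K V ≠ 1) :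
    ∃ k, (∃ a ∈ derivedSeries G k, ∀ c : K, ρ a ≠ c • 1) ∧
      ∀ a ∈ derivedSeries G (k + 1), ∃ c : K, ρ a = c • 1 := by
  by_contra! hstep
  have hall (k : ℕ) : ∃ a ∈ derivedSeries G k, ∀ c : K, ρ a ≠ c • 1 := by
    induction k with
    | zero => simpa using exists_not_scalar hV
    | succ k ih => exact hstep k ih
  obtain ⟨N, hN⟩ := (Group.isSolvable_def G).1 inferInstance
  obtain ⟨a, ha, hns⟩ := hall N
  rw [hN, Subgroup.mem_bot] at ha
  exact hns 1 (by rw [ha, map_one, one_smul])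

open scoped commutatorElement in
theorem commute_of_commutator_eq_smul_one [FiniteDimensional K V]
    (hV : (Module.finrank K V).Coprime (Nat.card G)) {a b : G} {z : K}
    (hz : ρ ⁅a, b⁆ = z • 1) : Commute (ρ a) (ρ b) := by
  have hab : ρ a * ρ b = ρ ⁅a, b⁆ * (ρ b * ρ a) := by
    rw [← map_mul, ← map_mul, ← map_mul, commutatorElement_def]
    congr 1
    group
  rcases subsingleton_or_nontrivial V with hsub | hnt
  · exact Subsingleton.elim _ _
  have hdet : z ^ Module.finrank K V = 1 := by
    let δ : G →* Kˣ := MonoidHom.toHomUnits ((LinearMap.det (M := V)).comp ρ)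
    have hδ : δ ⁅a, b⁆ = 1 := by
      rw [map_commutatorElement, commutatorElement_eq_one_iff_commute]
      exact Commute.all _ _
    have hval : LinearMap.det (ρ ⁅a, b⁆) = 1 := congrArg Units.val hδ
    simpa only [hz, LinearMap.det_smul, map_one, mul_one] using hval
  have hcard : z ^ Nat.card G = 1 := by
    have hpow : (z • 1 : Module.End K V) ^ Nat.card G = 1 := by
      rw [← hz, ← map_pow, pow_card_eq_one', map_one]
    rw [smul_pow, one_pow] at hpow
    exact smul_left_injective K one_ne_zero (hpow.trans (one_smul K 1).symm)
  have hz1 : z = 1 := by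
    simpa only [hV.gcd_eq_one, pow_one] using pow_gcd_eq_one.2 ⟨hdet, hcard⟩
  rw [Commute, SemiconjBy, hab, hz, hz1, one_smul, one_mul]

theorem exists_common_eigenvector_of_finrank_eq_one {A : Subgroup G} {S : Submodule K V}
    (hS : Module.finrank K S = 1) (hinv : ∀ a ∈ A, ∀ v ∈ S, ρ a v ∈ S) :
    ∃ v : V, v ≠ 0 ∧ ∀ a ∈ A, ∃ c : K, ρ a v = c • v := by
  obtain ⟨v, hv, hspan⟩ := finrank_eq_one_iff'.1 hS
  refine ⟨v, Submodule.coe_eq_zero.not.2 hv, fun a ha => ?_⟩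
  obtain ⟨c, hc⟩ := hspan ⟨ρ a v, hinv a ha v v.2⟩
  exact ⟨c, congrArg Subtype.val hc.symm⟩

theorem exists_common_eigenvector_of_commute [FiniteDimensional K V]
    (hV : Module.finrank K V = 3) {A : Subgroup G} {X : Module.End K V}
    (hX : X ≠ 0) (hker : LinearMap.ker X ≠ ⊥) (hcomm : ∀ a ∈ A, Commute X (ρ a)) :
    ∃ v : V, v ≠ 0 ∧ ∀ a ∈ A, ∃ c : K, ρ a v = c • v := by
  have happ (a : G) (ha : a ∈ A) (w : V) : X (ρ a w) = ρ a (X w) :=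
    LinearMap.congr_fun (hcomm a ha).eq w
  have hrange : Module.finrank K (LinearMap.range X) ≠ 0 := by
    rwa [Ne, Submodule.finrank_eq_zero, LinearMap.range_eq_bot]
  have hker0 : Module.finrank K (LinearMap.ker X) ≠ 0 := by
    rwa [Ne, Submodule.finrank_eq_zero]
  have hsum := LinearMap.finrank_range_add_finrank_ker X
  obtain hker1 | hrange1 : Module.finrank K (LinearMap.ker X) = 1 ∨
      Module.finrank K (LinearMap.range X) = 1 := by omega
  · refine exists_common_eigenvector_of_finrank_eq_one hker1 fun a ha w hw => ?_
    rw [LinearMap.mem_ker] at hw ⊢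
    rw [happ a ha, hw, map_zero]
  · refine exists_common_eigenvector_of_finrank_eq_one hrange1 ?_
    rintro a ha _ ⟨w, rfl⟩
    exact ⟨ρ a w, happ a ha w⟩

theorem ker_commutator_sub_one_ne_bot [FiniteDimensional K V] (hV : 3 ≤ Module.finrank K V)
    {r : G} {b : V} {f : Module.Dual K V} (hr : ρ r = Module.preReflection b f) (a : G) :
    LinearMap.ker (ρ (a * r * a⁻¹ * r⁻¹) - 1) ≠ ⊥ := by
  -- Both `r` and `a * r * a⁻¹` fix every common zero of `f` and `f ∘ ρ a⁻¹`.
  have hle : LinearMap.ker (f.prod (f ∘ₗ ρ a⁻¹)) ≤ LinearMap.ker (ρ (a * r * a⁻¹ * r⁻¹) - 1) := by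
    intro w hw
    obtain ⟨hfw, hfaw⟩ : f w = 0 ∧ f (ρ a⁻¹ w) = 0 := by simpa using hw
    have hfix (v : V) (hv : f v = 0) : ρ r v = v := by
      rw [hr, Module.preReflection_apply, hv, zero_smul, sub_zero]
    have hrw : ρ r⁻¹ w = w := by rw [ρ.inv_apply_eq_iff, hfix w hfw]
    rw [LinearMap.mem_ker, LinearMap.sub_apply, Module.End.one_apply, sub_eq_zero]
    simp only [map_mul, Module.End.mul_apply]
    rw [hrw, hfix _ hfaw, ρ.self_inv_apply]
  have hsum := LinearMap.finrank_range_add_finrank_ker (f.prod (f ∘ₗ ρ a⁻¹))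
  have hrange := Submodule.finrank_le (LinearMap.range (f.prod (f ∘ₗ ρ a⁻¹)))
  rw [Module.finrank_prod, Module.finrank_self] at hrange
  intro hbot
  rw [hbot, le_bot_iff] at hle
  rw [hle, finrank_bot] at hsum
  omega

theorem commutator_sub_one_ne_zero {r : G} {b : V} {f : Module.Dual K V} (hf : f ≠ 0)
    (hr : ρ r = Module.preReflection b f) {a : G} (hab : ∀ c : K, ρ a b ≠ c • b) :
    ρ (a * r * a⁻¹ * r⁻¹) - 1 ≠ 0 := by
  obtain ⟨w, hw⟩ := DFunLike.ne_iff.1 hf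
  rw [LinearMap.zero_apply] at hw
  intro h0
  have hswap : ρ (a * r) = ρ (r * a) := by
    rw [← one_mul (ρ (r * a)), ← sub_eq_zero.1 h0, ← map_mul]
    congr 1
    group
  have happ := LinearMap.congr_fun hswap w
  simp only [map_mul, Module.End.mul_apply, hr, Module.preReflection_apply, map_sub,
    map_smul] at happ
  refine hab ((f w)⁻¹ * f (ρ a w)) ?_
  rw [mul_smul, ← sub_right_injective happ, smul_smul, inv_mul_cancel₀ hw, one_smul]

theorem exists_common_eigenvector_of_preReflection (hV : Module.finrank K V = 3)
    {A : Subgroup G} [A.Normal] (hcomm : ∀ a ∈ A, ∀ b ∈ A, Commute (ρ a) (ρ b))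
    {r : G} {b : V} {f : Module.Dual K V} (hb : b ≠ 0) (hf : f ≠ 0)
    (hr : ρ r = Module.preReflection b f) :
    ∃ v : V, v ≠ 0 ∧ ∀ a ∈ A, ∃ c : K, ρ a v = c • v := by
  have : FiniteDimensional K V := Module.finite_of_finrank_pos (by omega)
  by_cases hline : ∀ a ∈ A, ∃ c : K, ρ a b = c • b
  · exact ⟨b, hb, hline⟩
  push Not at hline
  obtain ⟨a, ha, hab⟩ := hline
  have hmem : a * r * a⁻¹ * r⁻¹ ∈ A := by
    rw [mul_assoc, mul_assoc, ← mul_assoc r]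
    exact A.mul_mem ha (‹A.Normal›.conj_mem _ (A.inv_mem ha) r)
  exact exists_common_eigenvector_of_commute hV (commutator_sub_one_ne_zero hf hr hab)
    (ker_commutator_sub_one_ne_bot hV.ge hr a)
    fun c hc => (hcomm _ hmem c hc).sub_left (Commute.one_left _)

theorem three_dvd_card_of_preReflection [Group.IsSolvable G] [ρ.IsIrreducible]
    (hV : Module.finrank K V = 3) {r : G} {b : V} {f : Module.Dual K V} (hb : b ≠ 0) (hf : f ≠ 0)
    (hr : ρ r = Module.preReflection b f) : 3 ∣ Nat.card G := by
  by_contra h3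
  have : FiniteDimensional K V := Module.finite_of_finrank_pos (by omega)
  obtain ⟨k, ⟨a, ha, hns⟩, hk⟩ := exists_derivedSeries_not_scalar (ρ := ρ) (by omega)
  have hcomm : ∀ a ∈ derivedSeries G k, ∀ b ∈ derivedSeries G k, Commute (ρ a) (ρ b) := by
    intro a ha b hb
    obtain ⟨z, hz⟩ := hk _ (Subgroup.commutator_mem_commutator ha hb)
    refine commute_of_commutator_eq_smul_one ?_ hz
    rwa [hV, Nat.prime_three.coprime_iff_not_dvd]
  obtain ⟨v, hv, hline⟩ := exists_common_eigenvector_of_preReflection hV hcomm hb hf hr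
  exact h3 (dvd_card_of_commute_of_prime_finrank Nat.prime_three hV hcomm ha hns hv hline)

end SolvableRankThree

section ReflectionTriple

variable {K V G : Type*} [Field K] [AddCommGroup V] [Module K V] [Group G]
  (ρ : Representation K G V)

/-- The setwise stabilizer in `G` of the subspace `U`. -/
def subspaceStabilizer (U : Submodule K V) : Subgroup G where
  carrier := {g | U.map (ρ g) = U}
  one_mem' := by simp [Module.End.one_eq_id]
  mul_mem' {a b} ha hb := by
    rw [Set.mem_ofPred_eq] at ha hb ⊢
    rw [map_mul, Module.End.mul_eq_comp, Submodule.map_comp, hb, ha]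
  inv_mem' {a} ha := by
    rw [Set.mem_ofPred_eq] at ha ⊢
    conv_lhs => rw [← ha]
    rw [← Submodule.map_comp, ← Module.End.mul_eq_comp, ← map_mul, inv_mul_cancel, map_one,
      Module.End.one_eq_id, Submodule.map_id]

/-- The action on the subspace `U` of its stabilizer. -/
def subspaceRepresentation (U : Submodule K V) : Representation K (subspaceStabilizer ρ U) U :=
  Subrepresentation.toRepresentation (ρ := ρ.comp (subspaceStabilizer ρ U).subtype)
    ⟨U, fun g _ hv => g.2.le (Submodule.mem_map_of_mem hv)⟩

/-- Some element of `G` acts as the reflection `v ↦ v - f v • x` with root `x` and coroot `f`. -/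
def HasReflection (x : V) (f : Module.Dual K V) : Prop :=
  f x = 2 ∧ ∃ r : G, ρ r = Module.preReflection x f

variable {ρ}

theorem HasReflection.restrict {x : V} {f : Module.Dual K V} (h : HasReflection ρ x f)
    {U : Submodule K V} (hx : x ∈ U) :
    HasReflection (subspaceRepresentation ρ U) ⟨x, hx⟩ (f ∘ₗ U.subtype) := by
  obtain ⟨hfx, r, hr⟩ := h
  have hle : U.map (ρ r) ≤ U := by
    rintro _ ⟨v, hv, rfl⟩
    rw [hr, Module.preReflection_apply]
    exact U.sub_mem hv (U.smul_mem _ hx)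
  have hr_mem : r ∈ subspaceStabilizer ρ U := by
    refine le_antisymm hle fun v hv => ⟨ρ r v, hle (Submodule.mem_map_of_mem hv), ?_⟩
    rw [hr]
    exact Module.involutive_preReflection hfx v
  exact ⟨hfx, ⟨r, hr_mem⟩, LinearMap.ext fun u => Subtype.ext (LinearMap.congr_fun hr u)⟩

theorem HasReflection.mem_of_apply_ne_zero {x : V} {f : Module.Dual K V}
    (h : HasReflection ρ x f) {S : Submodule K V} (hS : ∀ g, ∀ v ∈ S, ρ g v ∈ S) {v : V}
    (hv : v ∈ S) (hfv : f v ≠ 0) : x ∈ S := by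
  obtain ⟨-, r, hr⟩ := h
  have hsub : f v • x ∈ S := by
    simpa [hr, Module.preReflection_apply] using S.sub_mem hv (hS r v hv)
  exact (S.smul_mem_iff hfv).1 hsub

theorem isIrreducible_of_apply_mem [Nontrivial V]
    (h : ∀ S : Submodule K V, S ≠ ⊥ → (∀ g, ∀ v ∈ S, ρ g v ∈ S) → S = ⊤) : ρ.IsIrreducible where
  exists_pair_ne := ⟨⊥, ⊤, fun hbot =>
    bot_ne_top (α := Submodule K V) (congrArg Subrepresentation.toSubmodule hbot)⟩
  eq_bot_or_eq_top S := by
    by_cases hS : S.toSubmodule = ⊥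
    · exact Or.inl (Subrepresentation.toSubmodule_injective hS)
    · exact Or.inr (Subrepresentation.toSubmodule_injective (h _ hS S.apply_mem_toSubmodule))

variable {x y z : V} {f g h : Module.Dual K V}

theorem isIrreducible_of_hasReflection [Nontrivial V] (hx : HasReflection ρ x f)
    (hy : HasReflection ρ y g) (hz : HasReflection ρ z h) (hfy : f y ≠ 0) (hhy : h y ≠ 0)
    (hgx : g x ≠ 0) (hgz : g z ≠ 0) (hspan : Submodule.span K {y, x, z} = ⊤)
    (hker : ∀ v, f v = 0 → g v = 0 → h v = 0 → v = 0) : ρ.IsIrreducible := by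
  refine isIrreducible_of_apply_mem fun S hS hinv => ?_
  obtain ⟨s, hs, hs0⟩ := S.ne_bot_iff.1 hS
  have hyS : y ∈ S := by
    by_contra hyS
    refine hs0 (hker s ?_ ?_ ?_) <;> by_contra hne
    · exact hyS (hy.mem_of_apply_ne_zero hinv (hx.mem_of_apply_ne_zero hinv hs hne) hgx)
    · exact hyS (hy.mem_of_apply_ne_zero hinv hs hne)
    · exact hyS (hy.mem_of_apply_ne_zero hinv (hz.mem_of_apply_ne_zero hinv hs hne) hgz)
  rw [eq_top_iff, ← hspan, Submodule.span_le]
  rintro _ (rfl | rfl | rfl)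
  · exact hyS
  · exact hx.mem_of_apply_ne_zero hinv hyS hfy
  · exact hz.mem_of_apply_ne_zero hinv hyS hhy

theorem card_cast_eq_zero_of_apply_eq_add {t : G} {v w : V} (hv : v ≠ 0) (htv : ρ t v = v)
    (htw : ρ t w = w + v) : (Nat.card G : K) = 0 := by
  have hpow (m : ℕ) : ρ (t ^ m) w = w + (m : K) • v := by
    induction m with
    | zero => simp
    | succ m ih =>
      rw [pow_succ', map_mul, Module.End.mul_apply, ih, map_add, map_smul, htv, htw,
        Nat.cast_succ, add_smul, one_smul]
      abel
  have hcard := hpow (Nat.card G)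
  rw [pow_card_eq_one', map_one, Module.End.one_apply, left_eq_add] at hcard
  exact (smul_eq_zero.1 hcard).resolve_right hv

theorem linearIndependent_of_coroots (h2 : (2 : K) ≠ 0) (hfx : f x = 2) (hhz : h z = 2)
    (hfz : f z = 0) (hhx : h x = 0) (hspan : y ∉ Submodule.span K {x, z}) :
    LinearIndependent K ![y, x, z] := by
  refine linearIndependent_finCons.2 ⟨LinearIndependent.pair_iff.2 fun α γ h0 => ⟨?_, ?_⟩, ?_⟩
  · simpa [hfx, hfz, h2] using congrArg f h0
  · simpa [hhx, hhz, h2] using congrArg h h0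
  · simpa [Set.pair_comm] using hspan

theorem three_dvd_card_of_hasReflection [Group.IsSolvable G] (h2 : (2 : K) ≠ 0)
    (hV : Module.finrank K V = 3) (hx : HasReflection ρ x f) (hy : HasReflection ρ y g)
    (hz : HasReflection ρ z h) (hfz : f z = 0) (hhx : h x = 0) (hfy : f y ≠ 0) (hhy : h y ≠ 0)
    (hgx : g x ≠ 0) (hgz : g z ≠ 0) (hspan : y ∉ Submodule.span K {x, z})
    (hg : g (f y • x + h y • z - (2 : K) • y) ≠ 0) : 3 ∣ Nat.card G := by
  have : Nontrivial V := Module.nontrivial_of_finrank_pos (R := K) (by omega)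
  have htop : Submodule.span K {y, x, z} = ⊤ := by
    rw [← (linearIndependent_of_coroots h2 hx.1 hz.1 hfz hhx hspan).span_eq_top_of_card_eq_finrank
      (by simp [hV])]
    simp [Matrix.range_cons, Set.pair_comm, Set.insert_comm]
  have hker : ∀ v, f v = 0 → g v = 0 → h v = 0 → v = 0 := by
    intro v hfv hgv hhv
    obtain ⟨β, u, hu, rfl⟩ := Submodule.mem_span_insert.1 (htop ▸ Submodule.mem_top : v ∈ _)
    obtain ⟨α, γ, rfl⟩ := Submodule.mem_span_pair.1 hu
    simp only [map_add, map_sub, map_smul, smul_eq_mul, hx.1, hy.1, hz.1, hfz, hhx]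
      at hfv hgv hhv hg
    have hβ : β = 0 := by
      refine (mul_eq_zero.1 ?_).resolve_right hg
      linear_combination g x * hfv + g z * hhv - 2 * hgv
    have hα : α * 2 = 0 := by linear_combination hfv - f y * hβ
    have hγ : γ * 2 = 0 := by linear_combination hhv - h y * hβ
    simp [(mul_eq_zero.1 hα).resolve_right h2, hβ, (mul_eq_zero.1 hγ).resolve_right h2]
  have := isIrreducible_of_hasReflection hx hy hz hfy hhy hgx hgz htop hker
  obtain ⟨hgy, r, hr⟩ := hy
  have hne : g y ≠ 0 := hgy ▸ h2
  exact three_dvd_card_of_preReflection hV (fun h0 => hne (by rw [h0, map_zero]))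
    (fun h0 => hne (by rw [h0, LinearMap.zero_apply])) hr

-- The product of the three reflections acts as a transvection on the span of `x, y, z`.
theorem card_cast_eq_zero_of_degenerate (h2 : (2 : K) ≠ 0) (hx : HasReflection ρ x f)
    (hy : HasReflection ρ y g) (hz : HasReflection ρ z h) (hfz : f z = 0) (hhx : h x = 0)
    (hspan : y ∉ Submodule.span K {x, z})
    (hg : g (f y • x + h y • z - (2 : K) • y) = 0) : (Nat.card G : K) = 0 := by
  set v : V := f y • x + h y • z - (2 : K) • y with hv
  have hfv : f v = 0 := by simp [v, hx.1, hfz, mul_comm]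
  have hhv : h v = 0 := by simp [v, hz.1, hhx, mul_comm]
  have hv0 : v ≠ 0 := fun h0 => hspan <| ((Submodule.span K {x, z}).smul_mem_iff h2).1 <|
    sub_eq_zero.1 (hv ▸ h0) ▸ Submodule.mem_span_pair.2 ⟨f y, h y, rfl⟩
  obtain ⟨-, rx, hrx⟩ := hx
  obtain ⟨hgy, ry, hry⟩ := hy
  obtain ⟨-, rz, hrz⟩ := hz
  have ht (w : V) : ρ (rx * rz * ry) w = Module.preReflection x f
      (Module.preReflection z h (Module.preReflection y g w)) := by
    rw [map_mul, map_mul, hrx, hry, hrz, Module.End.mul_apply, Module.End.mul_apply]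
  refine card_cast_eq_zero_of_apply_eq_add hv0 (?_ : ρ (rx * rz * ry) v = v)
    (?_ : ρ (rx * rz * ry) y = y + v) <;> simp only [ht, Module.preReflection_apply]
  · simp only [hfv, hg, hhv, zero_smul, sub_zero]
  · simp only [hgy, hv, map_sub, map_smul, hfz, smul_eq_mul]
    module

theorem card_cast_eq_zero_or_three_dvd_card [Group.IsSolvable G] (h2 : (2 : K) ≠ 0)
    (hx : HasReflection ρ x f) (hy : HasReflection ρ y g) (hz : HasReflection ρ z h)
    (hfz : f z = 0) (hhx : h x = 0) (hfy : f y ≠ 0) (hhy : h y ≠ 0)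
    (hgx : g x ≠ 0) (hgz : g z ≠ 0) (hspan : y ∉ Submodule.span K {x, z}) :
    (Nat.card G : K) = 0 ∨ 3 ∣ Nat.card G := by
  refine or_iff_not_imp_left.2 fun hcard => ?_
  have hg : g (f y • x + h y • z - (2 : K) • y) ≠ 0 := fun hg =>
    hcard (card_cast_eq_zero_of_degenerate h2 hx hy hz hfz hhx hspan hg)
  let U : Submodule K V := Submodule.span K (Set.range ![y, x, z])
  have hyU : y ∈ U := Submodule.subset_span ⟨0, rfl⟩
  have hxU : x ∈ U := Submodule.subset_span ⟨1, rfl⟩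
  have hzU : z ∈ U := Submodule.subset_span ⟨2, rfl⟩
  have hU : Module.finrank K U = 3 :=
    (finrank_span_eq_card (linearIndependent_of_coroots h2 hx.1 hz.1 hfz hhx hspan)).trans
      (Fintype.card_fin 3)
  have hspanU : (⟨y, hyU⟩ : U) ∉ Submodule.span K {⟨x, hxU⟩, ⟨z, hzU⟩} := fun hmem => hspan <| by
    simpa [Submodule.map_span, Set.image_pair] using Submodule.mem_map_of_mem (f := U.subtype) hmem
  exact (three_dvd_card_of_hasReflection h2 hU (hx.restrict hxU) (hy.restrict hyU)
    (hz.restrict hzU) hfz hhx hfy hhy hgx hgz hspanU hg).trans (Subgroup.card_subgroup_dvd_card _)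

end ReflectionTriple

section HermitianForm

variable {K ι : Type*} [Field K] [Fintype ι] {φ : K →+* K}

/-- The standard hermitian form `∑ i, φ (u i) * v i`, semilinear in the first argument. -/
def hermForm (φ : K →+* K) : (ι → K) →ₛₗ[φ] Module.Dual K (ι → K) :=
  LinearMap.mk₂'ₛₗ φ (RingHom.id K) (fun u v => (φ ∘ u) ⬝ᵥ v)
    (fun u₁ u₂ v => by simp [dotProduct, add_mul, Finset.sum_add_distrib])
    (fun c u v => by simp [dotProduct, Finset.mul_sum, mul_assoc])
    (fun u v₁ v₂ => dotProduct_add _ v₁ v₂)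
    (fun c u v => dotProduct_smul c _ v)

theorem hermForm_apply (u v : ι → K) : hermForm φ u v = (φ ∘ u) ⬝ᵥ v :=
  rfl

theorem map_hermForm (hφ : Function.Involutive φ) (u v : ι → K) :
    φ (hermForm φ u v) = hermForm φ v u := by
  simp only [hermForm_apply, dotProduct, Function.comp_apply, map_sum, map_mul, hφ (u _),
    mul_comm (u _)]

theorem hermForm_eq_zero_comm (hφ : Function.Involutive φ) {u v : ι → K} :
    hermForm φ u v = 0 ↔ hermForm φ v u = 0 := by
  rw [← map_hermForm hφ v u, map_eq_zero]

variable [DecidableEq ι]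

theorem hermForm_single_left (i : ι) (v : ι → K) : hermForm φ (Pi.single i 1) v = v i := by
  have hcomp : φ ∘ Pi.single i (1 : K) = Pi.single i 1 := by
    ext j
    rcases eq_or_ne j i with rfl | hj
    · simp
    · simp [hj]
  rw [hermForm_apply, hcomp, single_one_dotProduct]

theorem hermForm_single_right (u : ι → K) (i : ι) : hermForm φ u (Pi.single i 1) = φ (u i) :=
  dotProduct_single_one _ i

end HermitianForm

section UnitaryGroup

variable {n : ℕ} {K : Type*} [Field K] {φ : K →+* K}

theorem hermForm_mulVec {g : GL (Fin n) K} (hg : g ∈ GUgrp n φ) (u v : Fin n → K) :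
    hermForm φ (g.val *ᵥ u) (g.val *ᵥ v) = hermForm φ u v := by
  have hcomp : φ ∘ (g.val *ᵥ u) = (φ ∘ u) ᵥ* (g.val.map φ)ᵀ := by
    rw [vecMul_transpose]
    exact funext fun i => φ.map_mulVec _ _ i
  have hgg : (g.val.map φ)ᵀ * g.val = 1 := hg
  rw [hermForm_apply, hermForm_apply, hcomp, ← dotProduct_mulVec, mulVec_mulVec, hgg, one_mulVec]

theorem exists_mem_GUgrp_val_eq {M : Matrix (Fin n) (Fin n) K} (hM : (M.map φ)ᵀ * M = 1) :
    ∃ g ∈ GUgrp n φ, g.val = M :=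
  ⟨⟨M, _, mul_eq_one_comm.1 hM, hM⟩, hM, rfl⟩

theorem exists_mem_GUgrp_of_hermForm {T : Module.End K (Fin n → K)}
    (hT : ∀ u v, hermForm φ (T u) (T v) = hermForm φ u v) :
    ∃ g ∈ GUgrp n φ, ∀ x, g.val *ᵥ x = T x := by
  have hM : (T.toMatrix'.map φ)ᵀ * T.toMatrix' = 1 := by
    ext i j
    calc ((T.toMatrix'.map φ)ᵀ * T.toMatrix') i j
        = hermForm φ (T (Pi.single i 1)) (T (Pi.single j 1)) := by
          simp only [← LinearMap.toMatrix'_mulVec, mulVec_single_one]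
          rfl
      _ = (1 : Matrix (Fin n) (Fin n) K) i j := by
          rw [hT, hermForm_single_left, one_apply, Pi.single_apply]
  obtain ⟨g, hg, hgT⟩ := exists_mem_GUgrp_val_eq hM
  exact ⟨g, hg, fun x => by rw [hgT, LinearMap.toMatrix'_mulVec]⟩

theorem exists_quasiReflection (hφ : Function.Involutive φ) {a : Fin n → K}
    (ha : hermForm φ a a ≠ 0) {ζ : K} (hζ : ζ * φ ζ = 1) :
    ∃ g ∈ GUgrp n φ, ∀ x, g.val *ᵥ x = x + ((ζ - 1) / hermForm φ a a * hermForm φ a x) • a := by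
  refine exists_mem_GUgrp_of_hermForm
    (T := 1 + (((ζ - 1) / hermForm φ a a) • hermForm φ a).smulRight a) fun u v => ?_
  simp only [LinearMap.add_apply, Module.End.one_apply, LinearMap.smulRight_apply,
    LinearMap.smul_apply, map_add, map_smulₛₗ, smul_eq_mul, map_mul, map_div₀, map_sub, map_one,
    map_hermForm hφ, RingHom.id_apply]
  field_simp
  linear_combination hermForm φ a v * hermForm φ u a * hζ

/-- The linear form `x ↦ 2 ⟪a, x⟫ / ⟪a, a⟫` of the hermitian reflection with root `a`. It vanishes
identically when `a` is isotropic, as `2 / 0 = 0`. -/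
def coroot (φ : K →+* K) (a : Fin n → K) : Module.Dual K (Fin n → K) :=
  (2 / hermForm φ a a) • hermForm φ a

theorem coroot_apply (a x : Fin n → K) :
    coroot φ a x = 2 / hermForm φ a a * hermForm φ a x :=
  rfl

theorem coroot_self {a : Fin n → K} (ha : hermForm φ a a ≠ 0) : coroot φ a a = 2 :=
  div_mul_cancel₀ 2 ha

theorem coroot_apply_ne_zero (h2 : (2 : K) ≠ 0) {a x : Fin n → K} (ha : hermForm φ a a ≠ 0)
    (hx : hermForm φ a x ≠ 0) : coroot φ a x ≠ 0 :=
  mul_ne_zero (div_ne_zero h2 ha) hx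

theorem coroot_apply_eq_zero {a x : Fin n → K} (hx : hermForm φ a x = 0) : coroot φ a x = 0 := by
  rw [coroot_apply, hx, mul_zero]

theorem coroot_mulVec {g : GL (Fin n) K} (hg : g ∈ GUgrp n φ) (a x : Fin n → K) :
    coroot φ (g.val *ᵥ a) (g.val *ᵥ x) = coroot φ a x := by
  simp only [coroot_apply, hermForm_mulVec hg]

/-- `a` is a nonisotropic vector whose hermitian reflection lies in `H`. -/
def IsRoot (φ : K →+* K) (H : Subgroup (GL (Fin n) K)) (a : Fin n → K) : Prop :=
  hermForm φ a a ≠ 0 ∧ ∃ r ∈ H, ∀ x, r.val *ᵥ x = x - coroot φ a x • a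

theorem exists_reflection (hφ : Function.Involutive φ) {a : Fin n → K}
    (ha : hermForm φ a a ≠ 0) : ∃ g ∈ GUgrp n φ, ∀ x, g.val *ᵥ x = x - coroot φ a x • a := by
  obtain ⟨g, hg, hgx⟩ := exists_quasiReflection hφ ha (ζ := -1) (by simp)
  refine ⟨g, hg, fun x => ?_⟩
  rw [hgx, coroot_apply, sub_eq_add_neg x, ← neg_smul]
  congr 2
  ring

variable {H : Subgroup (GL (Fin n) K)}

theorem IsRoot.mulVec (hH : H ≤ GUgrp n φ) {a : Fin n → K} (ha : IsRoot φ H a)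
    {g : GL (Fin n) K} (hg : g ∈ H) : IsRoot φ H (g.val *ᵥ a) := by
  obtain ⟨ha0, r, hr, hrx⟩ := ha
  refine ⟨by rwa [hermForm_mulVec (hH hg)], g * r * g⁻¹,
    H.mul_mem (H.mul_mem hg hr) (H.inv_mem hg), fun x => ?_⟩
  have hgx : g.val *ᵥ (g⁻¹.val *ᵥ x) = x := by rw [mulVec_mulVec, g.mul_inv, one_mulVec]
  rw [Units.val_mul, Units.val_mul, ← mulVec_mulVec, ← mulVec_mulVec, hrx, mulVec_sub,
    mulVec_smul, hgx, ← coroot_mulVec (hH hg), hgx]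

/-- The natural representation of a matrix group on column vectors. -/
def naturalRep (H : Subgroup (GL (Fin n) K)) : Representation K H (Fin n → K) :=
  ((Matrix.toLinAlgEquiv' (R := K) (n := Fin n) : _ →* _).comp (Units.coeHom _)).comp H.subtype

theorem IsRoot.hasReflection {a : Fin n → K} (ha : IsRoot φ H a) :
    HasReflection (naturalRep H) a (coroot φ a) := by
  obtain ⟨ha0, r, hr, hrx⟩ := ha
  exact ⟨coroot_self ha0, ⟨r, hr⟩, LinearMap.ext fun x => hrx x⟩

/-- Any three roots `x`, `y`, `z` of `H` in which `x`, `z` are orthogonal to each other but not to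
`y` are linearly dependent. -/
def RootPathsDependent (φ : K →+* K) (H : Subgroup (GL (Fin n) K)) : Prop :=
  ∀ ⦃x y z : Fin n → K⦄, IsRoot φ H x → IsRoot φ H y → IsRoot φ H z → hermForm φ x z = 0 →
    hermForm φ x y ≠ 0 → hermForm φ z y ≠ 0 → y ∈ Submodule.span K {x, z}

theorem rootPathsDependent (hφ : Function.Involutive φ) (h2 : (2 : K) ≠ 0) [Group.IsSolvable H]
    (h3 : ¬ 3 ∣ Nat.card H) (hK : (Nat.card H : K) ≠ 0) : RootPathsDependent φ H := by
  intro x y z hx hy hz hxz hxy hzy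
  by_contra hspan
  have hzx := (hermForm_eq_zero_comm hφ).1 hxz
  have hyx := (hermForm_eq_zero_comm hφ).not.1 hxy
  have hyz := (hermForm_eq_zero_comm hφ).not.1 hzy
  rcases card_cast_eq_zero_or_three_dvd_card h2 hx.hasReflection hy.hasReflection
    hz.hasReflection (coroot_apply_eq_zero hxz) (coroot_apply_eq_zero hzx)
    (coroot_apply_ne_zero h2 hx.1 hxy) (coroot_apply_ne_zero h2 hz.1 hzy)
    (coroot_apply_ne_zero h2 hy.1 hyx) (coroot_apply_ne_zero h2 hy.1 hyz) hspan with h | h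
  · exact hK h
  · exact h3 h

end UnitaryGroup

section BlockPermutations

variable {n : ℕ} {K : Type*} [Field K]

theorem mem_conjBy {G : Type*} [Group G] {H : Subgroup G} {x g : G} :
    g ∈ conjBy H x ↔ x * g * x⁻¹ ∈ H := by
  rw [conjBy, Subgroup.mem_map_equiv, MulAut.conj_symm_apply, inv_inv]

theorem exists_le_conjBy_of_isPGroup {G : Type*} [Group G] {p : ℕ} [Fact p.Prime]
    {Q Γ H : Subgroup G} (hQ : IsPGroup p Q) (hQΓ : Q ≤ Γ) (hp : ¬ p ∣ H.relIndex Γ) :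
    ∃ γ ∈ Γ, Q ≤ conjBy H γ := by
  have : Finite (Γ ⧸ H.subgroupOf Γ) := Nat.finite_of_card_ne_zero fun h0 =>
    hp (h0 ▸ dvd_zero p : p ∣ Nat.card (Γ ⧸ H.subgroupOf Γ))
  have hQ' : IsPGroup p (Q.subgroupOf Γ) := hQ.comap_subtype
  obtain ⟨c, hc⟩ := hQ'.nonempty_fixed_point_of_prime_not_dvd_card (Γ ⧸ H.subgroupOf Γ) hp
  induction c using QuotientGroup.induction_on with
  | H γ =>
    refine ⟨γ⁻¹, Γ.inv_mem γ.2, fun t ht => ?_⟩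
    have hfix : ((⟨t, hQΓ ht⟩ * γ : Γ) : Γ ⧸ H.subgroupOf Γ) = γ := hc ⟨⟨t, hQΓ ht⟩, ht⟩
    rw [eq_comm, QuotientGroup.eq, Subgroup.mem_subgroupOf] at hfix
    rw [mem_conjBy, inv_inv]
    simpa [mul_assoc] using hfix

/-- The index of the block containing `i`, where `Fin n` is cut into blocks of two consecutive
elements; the last block is a singleton when `n` is odd. -/
def pairIndex (i : Fin n) : ℕ :=
  i / 2

theorem exists_ne_pairIndex_eq {k l : Fin n} (hkl : k < l) :
    ∃ k', k' ≠ k ∧ pairIndex k' = pairIndex k := by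
  simp only [pairIndex, Fin.lt_def, Ne, Fin.ext_iff] at hkl ⊢
  by_cases hk : (k : ℕ) % 2 = 0
  · exact ⟨⟨k + 1, by omega⟩, by simp, by simp; omega⟩
  · exact ⟨⟨k - 1, by omega⟩, by simp; omega, by simp; omega⟩

theorem apply_apply_of_pairIndex_eq {σ : Equiv.Perm (Fin n)}
    (hσ : ∀ i, pairIndex (σ i) = pairIndex i) (i : Fin n) : σ (σ i) = i := by
  by_cases h : σ i = i
  · rw [h, h]
  have h' : σ (σ i) ≠ σ i := fun e => h (σ.injective e)
  have h1 := hσ i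
  have h2 := hσ (σ i)
  simp only [pairIndex, Ne, Fin.ext_iff] at *
  omega

/-- `g` permutes the lines spanned by the standard basis vectors within the blocks of `pairIndex`,
with entries squaring to one. -/
def IsSignedPairPerm (g : GL (Fin n) K) : Prop :=
  ∃ (σ : Equiv.Perm (Fin n)) (ε : Fin n → K), (∀ i, pairIndex (σ i) = pairIndex i) ∧
    (∀ i, ε i ^ 2 = 1) ∧ ∀ i, g.val *ᵥ Pi.single i 1 = ε i • Pi.single (σ i) 1

theorem IsSignedPairPerm.mul {g h : GL (Fin n) K} (hg : IsSignedPairPerm g)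
    (hh : IsSignedPairPerm h) : IsSignedPairPerm (g * h) := by
  obtain ⟨σ, ε, hσ, hε, hgσ⟩ := hg
  obtain ⟨τ, δ, hτ, hδ, hhτ⟩ := hh
  refine ⟨σ * τ, fun i => δ i * ε (τ i), fun i => ?_, fun i => ?_, fun i => ?_⟩
  · rw [Equiv.Perm.mul_apply, hσ, hτ]
  · rw [mul_pow, hδ, hε, one_mul]
  · rw [Units.val_mul, ← mulVec_mulVec, hhτ, mulVec_smul, hgσ, smul_smul, Equiv.Perm.mul_apply]

theorem IsSignedPairPerm.pow_four {g : GL (Fin n) K} (hg : IsSignedPairPerm g) : g ^ 4 = 1 := by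
  obtain ⟨σ, ε, hσ, hε, hgσ⟩ := hg
  have hsq (i : Fin n) : (g ^ 2).val *ᵥ Pi.single i 1 = (ε i * ε (σ i)) • Pi.single i 1 := by
    rw [pow_two, Units.val_mul, ← mulVec_mulVec, hgσ, mulVec_smul, hgσ, smul_smul,
      apply_apply_of_pairIndex_eq hσ]
  refine Units.ext (ext_of_mulVec_single fun i => ?_)
  rw [pow_mul g 2 2, pow_two (g ^ 2), Units.val_mul, ← mulVec_mulVec, hsq, mulVec_smul, hsq,
    smul_smul, ← pow_two, mul_pow, hε, hε, one_mul, one_smul, Units.val_one, one_mulVec]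

/-- The `2`-group of all matrices satisfying `IsSignedPairPerm`. -/
def signedPairPerms (n : ℕ) (K : Type*) [Field K] : Subgroup (GL (Fin n) K) where
  carrier := {g | IsSignedPairPerm g}
  one_mem' := ⟨1, 1, fun _ => rfl, fun _ => one_pow 2, fun i => by
    rw [Units.val_one, one_mulVec, Pi.one_apply, one_smul, Equiv.Perm.one_apply]⟩
  mul_mem' := IsSignedPairPerm.mul
  inv_mem' {g} hg := by
    have hinv : g⁻¹ = g * g * g := by
      rw [inv_eq_iff_mul_eq_one, ← hg.pow_four, pow_succ' g 3, pow_three']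
    rw [hinv]
    exact (hg.mul hg).mul hg

theorem isPGroup_signedPairPerms : IsPGroup 2 (signedPairPerms n K) :=
  fun g => ⟨2, Subtype.ext g.2.pow_four⟩

variable {φ : K →+* K} {H : Subgroup (GL (Fin n) K)}

theorem isRoot_single (hφ : Function.Involutive φ) (hT : signedPairPerms n K ⊓ GUgrp n φ ≤ H)
    (i : Fin n) : IsRoot φ H (Pi.single i 1) := by
  have hnorm : hermForm φ (Pi.single i 1) (Pi.single i (1 : K)) = 1 := by
    rw [hermForm_single_left, Pi.single_eq_same]
  have hne : hermForm φ (Pi.single i 1) (Pi.single i (1 : K)) ≠ 0 := by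
    rw [hnorm]
    exact one_ne_zero
  obtain ⟨g, hg, hgx⟩ := exists_reflection hφ hne
  refine ⟨hne, g, hT ⟨⟨1, fun j => if j = i then -1 else 1, fun _ => rfl, fun j => ?_,
    fun j => ?_⟩, hg⟩, hgx⟩
  · by_cases hj : j = i <;> simp [hj]
  · rw [hgx, coroot_apply, hnorm, hermForm_single_left, Equiv.Perm.one_apply]
    rcases eq_or_ne j i with rfl | hj
    · simp only [Pi.single_eq_same, if_true]
      module
    · simp only [Pi.single_eq_of_ne hj.symm, if_neg hj]
      module

theorem hermForm_single_sub_single_left (i j : Fin n) (v : Fin n → K) :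
    hermForm φ (Pi.single i 1 - Pi.single j 1) v = v i - v j := by
  rw [map_sub, LinearMap.sub_apply, hermForm_single_left, hermForm_single_left]

theorem isRoot_single_sub_single (hφ : Function.Involutive φ) (h2 : (2 : K) ≠ 0)
    (hT : signedPairPerms n K ⊓ GUgrp n φ ≤ H) {i j : Fin n} (hij : i ≠ j)
    (hpair : pairIndex i = pairIndex j) : IsRoot φ H (Pi.single i 1 - Pi.single j 1) := by
  have hnorm : hermForm φ (Pi.single i 1 - Pi.single j 1)
      (Pi.single i (1 : K) - Pi.single j 1) = 2 := by
    rw [hermForm_single_sub_single_left]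
    simp only [Pi.sub_apply, Pi.single_eq_same, Pi.single_eq_of_ne hij, Pi.single_eq_of_ne hij.symm,
      sub_zero, zero_sub, sub_neg_eq_add, one_add_one_eq_two]
  have hne : hermForm φ (Pi.single i 1 - Pi.single j 1)
      (Pi.single i (1 : K) - Pi.single j 1) ≠ 0 := hnorm ▸ h2
  obtain ⟨g, hg, hgx⟩ := exists_reflection hφ hne
  refine ⟨hne, g, hT ⟨⟨Equiv.swap i j, 1, fun k => ?_, fun _ => one_pow 2, fun k => ?_⟩, hg⟩, hgx⟩
  · rw [Equiv.swap_apply_def]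
    split_ifs with hi hj
    · rw [hi, hpair]
    · rw [hj, hpair]
    · rfl
  · rw [hgx, coroot_apply, hnorm, hermForm_single_sub_single_left, div_self h2, one_mul,
      Pi.one_apply, one_smul, Equiv.swap_apply_def]
    split_ifs with hi hj
    · simp [hi, hij.symm]
    · simp [hj, hij]
    · simp [Ne.symm hi, Ne.symm hj]

theorem IsRoot.apply_eq_zero (hφ : Function.Involutive φ)
    (hT : signedPairPerms n K ⊓ GUgrp n φ ≤ H) (hdep : RootPathsDependent φ H) {a : Fin n → K}
    (ha : IsRoot φ H a) {k l m : Fin n} (hkl : k ≠ l) (hk : a k ≠ 0) (hl : a l ≠ 0) (hmk : m ≠ k)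
    (hml : m ≠ l) : a m = 0 := by
  obtain ⟨α, β, rfl⟩ := Submodule.mem_span_pair.1 <|
    hdep (isRoot_single hφ hT k) ha (isRoot_single hφ hT l)
      (by rw [hermForm_single_left, Pi.single_eq_of_ne hkl])
      (by rwa [hermForm_single_left]) (by rwa [hermForm_single_left])
  simp [hmk, hml]

theorem IsRoot.apply_ne_zero (hφ : Function.Involutive φ) (h2 : (2 : K) ≠ 0)
    (hT : signedPairPerms n K ⊓ GUgrp n φ ≤ H) (hdep : RootPathsDependent φ H) {a : Fin n → K}
    (ha : IsRoot φ H a) {k k' l : Fin n} (hkk' : k' ≠ k) (hpair : pairIndex k' = pairIndex k)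
    (hkl : k ≠ l) (hk'l : k' ≠ l) (hk : a k ≠ 0) (hl : a l ≠ 0) : a k' ≠ 0 := by
  intro hk'
  obtain ⟨α, β, rfl⟩ := Submodule.mem_span_pair.1 <|
    hdep (isRoot_single hφ hT l) ha (isRoot_single_sub_single hφ h2 hT hkk'.symm hpair.symm)
      (by simp [hermForm_single_left, hkl.symm, hk'l.symm])
      (by rwa [hermForm_single_left])
      (by rwa [hermForm_single_sub_single_left, hk', sub_zero])
  simp only [Pi.add_apply, Pi.smul_apply, Pi.sub_apply, Pi.single_eq_same,
    Pi.single_eq_of_ne hkl, Pi.single_eq_of_ne hk'l, Pi.single_eq_of_ne hkk',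
    Pi.single_eq_of_ne hkk'.symm, smul_eq_mul] at hk hk'
  exact hk (by linear_combination -hk')

theorem IsRoot.pairIndex_eq (hφ : Function.Involutive φ) (h2 : (2 : K) ≠ 0)
    (hT : signedPairPerms n K ⊓ GUgrp n φ ≤ H) (hdep : RootPathsDependent φ H) {a : Fin n → K}
    (ha : IsRoot φ H a) {k l : Fin n} (hk : a k ≠ 0) (hl : a l ≠ 0) :
    pairIndex k = pairIndex l := by
  by_contra hne
  wlog hlt : k < l generalizing k l
  · exact this hl hk (Ne.symm hne)
      ((lt_or_gt_of_ne (ne_of_apply_ne pairIndex hne)).resolve_left hlt)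
  obtain ⟨k', hk'k, hpair⟩ := exists_ne_pairIndex_eq hlt
  have hk'l : k' ≠ l := ne_of_apply_ne pairIndex (hpair.trans_ne hne)
  exact ha.apply_ne_zero hφ h2 hT hdep hk'k hpair hlt.ne hk'l hk hl
    (ha.apply_eq_zero hφ hT hdep hlt.ne hk hl hk'k hk'l)

/-- Columns of `g` in a common block of `b` have their nonzero entries in a common block of rows. -/
def PermutesBlocks {ι β : Type*} (b : ι → β) (g : Matrix ι ι K) : Prop :=
  ∀ ⦃k k' j j'⦄, b j = b j' → g k j ≠ 0 → g k' j' ≠ 0 → b k = b k'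

theorem permutesBlocks_pairIndex (hφ : Function.Involutive φ) (h2 : (2 : K) ≠ 0)
    (hH : H ≤ GUgrp n φ) (hT : signedPairPerms n K ⊓ GUgrp n φ ≤ H)
    (hdep : RootPathsDependent φ H) {g : GL (Fin n) K} (hg : g ∈ H) :
    PermutesBlocks pairIndex g.val := by
  have hcol {j k k' : Fin n} (hk : g k j ≠ 0) (hk' : g k' j ≠ 0) : pairIndex k = pairIndex k' := by
    have hroot := (isRoot_single hφ hT j).mulVec hH hg
    rw [mulVec_single_one] at hroot
    exact hroot.pairIndex_eq hφ h2 hT hdep hk hk'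
  intro k k' j j' hpair hk hk'
  rcases eq_or_ne j j' with rfl | hj
  · exact hcol hk hk'
  by_contra hne
  have hkj' : g k j' = 0 := by_contra fun h => hne (hcol h hk')
  have hk'j : g k' j = 0 := by_contra fun h => hne (hcol hk h)
  have hroot := (isRoot_single_sub_single hφ h2 hT hj hpair).mulVec hH hg
  rw [mulVec_sub, mulVec_single_one, mulVec_single_one] at hroot
  refine hne (hroot.pairIndex_eq hφ h2 hT hdep ?_ ?_)
  · simpa [hkj'] using hk
  · simpa [hk'j] using hk'

end BlockPermutations

section Monomial

variable {K ι β : Type*} [Field K]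

/-- The nonzero entries of `g` are exactly those at the positions `(σ j, j)`. -/
def IsMonomial (σ : Equiv.Perm ι) (g : Matrix ι ι K) : Prop :=
  ∀ k j, g k j ≠ 0 ↔ k = σ j

theorem IsMonomial.comp_eq {σ : Equiv.Perm ι} {g : Matrix ι ι K} (hg : IsMonomial σ g)
    {b : ι → β} (hb : PermutesBlocks b g) {j j' : ι} (hj : b j = b j') :
    b (σ j) = b (σ j') :=
  hb hj ((hg _ _).2 rfl) ((hg _ _).2 rfl)

theorem IsMonomial.apply_eq_zero {g : Matrix ι ι K} (hg : IsMonomial 1 g) {k j : ι}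
    (hkj : k ≠ j) : g k j = 0 :=
  of_not_not ((hg k j).not.2 hkj)

variable [Fintype ι]

theorem IsMonomial.mul_apply {σ : Equiv.Perm ι} {g : Matrix ι ι K} (hg : IsMonomial σ g)
    (y : Matrix ι ι K) (m j : ι) : (g * y) (σ m) j = g (σ m) m * y m j := by
  refine (Matrix.mul_apply ..).trans (Finset.sum_eq_single m (fun l _ hl => ?_) (by simp))
  rw [of_not_not ((hg (σ m) l).not.2 fun h => hl (σ.injective h).symm), zero_mul]

variable [DecidableEq ι]

theorem exists_isMonomial {β' : Type*} {b : ι → β} {b' : ι → β'}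
    (hinj : ∀ ⦃k l⦄, b k = b l → b' k = b' l → k = l) {g : GL ι K}
    (hb : PermutesBlocks b g.val) (hb' : PermutesBlocks b' g.val) :
    ∃ σ, IsMonomial σ g.val := by
  have hdet : g.val.det ≠ 0 := ((isUnit_iff_isUnit_det _).1 g.isUnit).ne_zero
  have hcol (j : ι) : ∃ k, g.val k j ≠ 0 := by
    by_contra! h
    exact hdet (det_eq_zero_of_column_eq_zero j h)
  have hrow (k : ι) : ∃ j, g.val k j ≠ 0 := by
    by_contra! h
    exact hdet (det_eq_zero_of_row_eq_zero k h)
  choose σ hσ using hcol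
  have huniq {k j : ι} (hk : g.val k j ≠ 0) : k = σ j :=
    hinj (hb rfl hk (hσ j)) (hb' rfl hk (hσ j))
  have hsurj : Function.Surjective σ := fun k => (hrow k).imp fun _ hj => (huniq hj).symm
  refine ⟨Equiv.ofBijective σ (Finite.surjective_iff_bijective.1 hsurj), fun k j =>
    ⟨huniq, ?_⟩⟩
  rintro rfl
  exact hσ j

/-- The `i`-th row and column of `y` are those of the identity, while the `j`-th column has no
further zeros. -/
structure IsSpread (y : Matrix ι ι K) (i j : ι) : Prop where
  row_eq : y.row i = Pi.single i 1
  col_eq : y.col i = Pi.single i 1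
  apply_ne_zero : ∀ k ≠ i, y k j ≠ 0

section Spread

variable {y g : GL ι K} {i j : ι} {σ : Equiv.Perm ι} {b : ι → β}

theorem IsSpread.conj_apply (hy : IsSpread y.val i j) (s : ι) :
    (y⁻¹ * g * y).val i s = (g * y).val i s := by
  have hmul : g * y = y * (y⁻¹ * g * y) := by group
  calc (y⁻¹ * g * y).val i s = y.val.row i ⬝ᵥ (y⁻¹ * g * y).val.col s := by
        rw [hy.row_eq, single_one_dotProduct]
        rfl
    _ = (g * y).val i s := by
        rw [hmul, Units.val_mul y]
        rfl

theorem IsSpread.mul_apply_self (hy : IsSpread y.val i j) (k : ι) :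
    (g * y).val k i = g.val k i :=
  calc (g * y).val k i = g.val.row k ⬝ᵥ y.val.col i := rfl
    _ = g.val k i := by
      rw [hy.col_eq, dotProduct_single_one]
      rfl

theorem IsSpread.mul_apply_of_support (hy : IsSpread y.val i j) {s : ι}
    (hs : ∀ m, (y⁻¹ * g * y).val m s ≠ 0 → m = i ∨ m = j) {k : ι} (hk : k ≠ i) :
    (g * y).val k s = (y⁻¹ * g * y).val j s * y.val k j := by
  have hmul : g * y = y * (y⁻¹ * g * y) := by group
  have hki : y.val k i = 0 := by
    rw [← col_apply y.val, hy.col_eq, Pi.single_eq_of_ne hk]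
  rw [hmul, Units.val_mul y, Matrix.mul_apply, ← mul_comm (y.val k j)]
  refine Finset.sum_eq_single j (fun m _ hmj => ?_) (by simp)
  rcases eq_or_ne m i with rfl | hmi
  · rw [hki, zero_mul]
  · rw [of_not_not ((hs m).mt (not_or.2 ⟨hmi, hmj⟩)), mul_zero]

theorem IsSpread.perm_apply_eq (hy : IsSpread y.val i j) (hg : IsMonomial σ g.val)
    (hb : PermutesBlocks b (y⁻¹ * g * y).val) (hij : b i = b j)
    (hblock : ∀ m, b m = b i → m = i ∨ m = j) (hji : j ≠ i) {k : ι} (hki : k ≠ i) (hkj : k ≠ j) :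
    σ i = i := by
  by_contra hne
  obtain ⟨m, hm⟩ := σ.surjective i
  have hmi : m ≠ i := fun h => hne (h ▸ hm)
  have hconj : (y⁻¹ * g * y).val i j ≠ 0 := by
    rw [hy.conj_apply, Units.val_mul, ← hm, hg.mul_apply]
    exact mul_ne_zero ((hg _ _).2 rfl) (hy.apply_ne_zero m hmi)
  have hcol (l : ι) (hl : l ≠ i) : g.val l i = (y⁻¹ * g * y).val j i * y.val l j := by
    rw [← hy.mul_apply_self, hy.mul_apply_of_support (fun m hm => hblock m (hb hij hm hconj)) hl]
  have hzero : (y⁻¹ * g * y).val j i ≠ 0 := by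
    have hσ := (hg (σ i) i).2 rfl
    rw [hcol _ hne] at hσ
    exact left_ne_zero_of_mul hσ
  have hσ (l : ι) (hl : l ≠ i) : l = σ i :=
    (hg l i).1 (hcol l hl ▸ mul_ne_zero hzero (hy.apply_ne_zero l hl))
  exact hkj ((hσ k hki).trans (hσ j hji).symm)

theorem IsSpread.exists_apply_self_eq (hy : IsSpread y.val i j) (hg : IsMonomial 1 g.val)
    (hb : PermutesBlocks b (y⁻¹ * g * y).val) (hij : b i = b j)
    (hblock : ∀ m, b m = b i → m = i ∨ m = j) : ∃ c, ∀ k ≠ i, g.val k k = c := by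
  have hconj : (y⁻¹ * g * y).val i i ≠ 0 := by
    rw [hy.conj_apply, hy.mul_apply_self]
    exact (hg i i).2 rfl
  refine ⟨(y⁻¹ * g * y).val j j, fun k hk => mul_right_cancel₀ (hy.apply_ne_zero k hk) ?_⟩
  rw [← hy.mul_apply_of_support (fun m hm => hblock m (hb hij.symm hm hconj)) hk, Units.val_mul]
  exact (hg.mul_apply y.val k j).symm

end Spread

end Monomial

section TwoPairings

theorem eq_of_pairIndex_eq {n : ℕ} {i j k : Fin n} (hi : pairIndex i = pairIndex k)
    (hj : pairIndex j = pairIndex k) (hik : i ≠ k) (hjk : j ≠ k) : i = j := by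
  simp only [pairIndex, Ne, Fin.ext_iff] at *
  omega

/-- The index of the block containing `i` in the rotated partition `{1, 2}, {3, 4}, …`. -/
def shiftedPairIndex {n : ℕ} (i : Fin n) : ℕ :=
  pairIndex ((finRotate n).symm i)

theorem eq_of_shiftedPairIndex_eq {n : ℕ} {i j k : Fin n}
    (hi : shiftedPairIndex i = shiftedPairIndex k) (hj : shiftedPairIndex j = shiftedPairIndex k)
    (hik : i ≠ k) (hjk : j ≠ k) : i = j :=
  (finRotate n).symm.injective (eq_of_pairIndex_eq hi hj ((finRotate n).symm.injective.ne hik)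
    ((finRotate n).symm.injective.ne hjk))

variable {m : ℕ}

theorem shiftedPairIndex_finRotate (i : Fin (m + 1)) :
    shiftedPairIndex (finRotate (m + 1) i) = pairIndex i := by
  rw [shiftedPairIndex, Equiv.symm_apply_apply]

theorem eq_of_pairIndex_eq_of_shiftedPairIndex_eq ⦃k l : Fin (m + 3)⦄
    (h : pairIndex k = pairIndex l) (h' : shiftedPairIndex k = shiftedPairIndex l) : k = l := by
  obtain ⟨i, rfl⟩ := (finRotate (m + 3)).surjective k
  obtain ⟨j, rfl⟩ := (finRotate (m + 3)).surjective l
  rw [shiftedPairIndex_finRotate, shiftedPairIndex_finRotate] at h'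
  simp only [pairIndex, finRotate_apply, Fin.val_add_one, Fin.ext_iff, Fin.val_last] at *
  split_ifs at * <;> omega

theorem pairIndex_or_shiftedPairIndex_succ (i : Fin (m + 2)) :
    pairIndex i.succ = pairIndex i.castSucc ∨
      shiftedPairIndex i.succ = shiftedPairIndex i.castSucc := by
  rcases Nat.even_or_odd i with ⟨j, hj⟩ | ⟨j, hj⟩
  · left
    simp only [pairIndex, Fin.val_succ, Fin.val_castSucc]
    omega
  · right
    have hi : i.succ = finRotate (m + 3) i.castSucc := by
      rw [finRotate_apply, Fin.coeSucc_eq_succ]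
    have hi' : i.castSucc = finRotate (m + 3) ⟨2 * j, by omega⟩ := by
      ext
      rw [finRotate_apply, Fin.val_add_one_of_lt (by simp only [Fin.lt_def, Fin.val_last]; omega),
        Fin.val_castSucc, hj]
    rw [hi, shiftedPairIndex_finRotate, hi', shiftedPairIndex_finRotate, ← hi']
    simp only [pairIndex, Fin.val_castSucc]
    omega

theorem eq_one_of_pairIndex_of_shiftedPairIndex {σ : Equiv.Perm (Fin (m + 3))} (h0 : σ 0 = 0)
    (hσ : ∀ k l, pairIndex k = pairIndex l → pairIndex (σ k) = pairIndex (σ l))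
    (hσ' : ∀ k l, shiftedPairIndex k = shiftedPairIndex l →
      shiftedPairIndex (σ k) = shiftedPairIndex (σ l)) : σ = 1 := by
  ext1 i
  induction i using Fin.induction with
  | zero => exact h0
  | succ i ih =>
    rw [Equiv.Perm.one_apply] at ih ⊢
    have hne : σ i.succ ≠ i.castSucc := fun h =>
      (Fin.castSucc_lt_succ (i := i)).ne' (σ.injective (h.trans ih.symm))
    have hne' : i.succ ≠ i.castSucc := (Fin.castSucc_lt_succ (i := i)).ne'
    rcases pairIndex_or_shiftedPairIndex_succ i with h | h
    · refine eq_of_pairIndex_eq ?_ h hne hne'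
      rw [hσ _ _ h, ih]
    · refine eq_of_shiftedPairIndex_eq ?_ h hne hne'
      rw [hσ' _ _ h, ih]

theorem eq_smul_one_of_permutesBlocks {K : Type*} [Field K] {g y z : GL (Fin (m + 3)) K}
    (hb : PermutesBlocks pairIndex g.val) (hb' : PermutesBlocks shiftedPairIndex g.val)
    (hy : IsSpread y.val 0 1) (hby : PermutesBlocks pairIndex (y⁻¹ * g * y).val)
    (hz : IsSpread z.val 1 0) (hbz : PermutesBlocks pairIndex (z⁻¹ * g * z).val) :
    ∃ c : K, g.val = c • 1 := by
  obtain ⟨σ, hσ⟩ := exists_isMonomial eq_of_pairIndex_eq_of_shiftedPairIndex_eq hb hb'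
  have h01 : pairIndex (0 : Fin (m + 3)) = pairIndex (1 : Fin (m + 3)) := by
    simp [pairIndex]
  have hpair (k : Fin (m + 3)) (hk : pairIndex k = pairIndex (0 : Fin (m + 3))) :
      k = 0 ∨ k = 1 := by
    simp only [pairIndex, Fin.ext_iff, Fin.val_zero, Fin.val_one] at hk ⊢
    omega
  have h20 : (2 : Fin (m + 3)) ≠ 0 := Fin.ne_of_val_ne two_ne_zero
  have h21 : (2 : Fin (m + 3)) ≠ 1 := Fin.ne_of_val_ne (Nat.succ_ne_self 1)
  have hσ0 : σ 0 = 0 := hy.perm_apply_eq hσ hby h01 hpair one_ne_zero h20 h21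
  obtain rfl := eq_one_of_pairIndex_of_shiftedPairIndex hσ0 (fun _ _ => hσ.comp_eq hb)
    fun _ _ => hσ.comp_eq hb'
  obtain ⟨c, hc⟩ := hy.exists_apply_self_eq hσ hby h01 hpair
  obtain ⟨d, hd⟩ := hz.exists_apply_self_eq hσ hbz h01.symm fun k hk =>
    (hpair k (hk.trans h01.symm)).symm
  have hcd : c = d := by
    rw [← hc 2 h20, hd 2 h21]
  refine ⟨c, Matrix.ext fun k l => ?_⟩
  rw [Matrix.smul_apply, one_apply, smul_eq_mul]
  split_ifs with hkl
  · subst hkl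
    rcases eq_or_ne k 0 with rfl | hk
    · rw [hd 0 zero_ne_one, hcd, mul_one]
    · rw [hc k hk, mul_one]
  · rw [hσ.apply_eq_zero hkl, mul_zero]

end TwoPairings

section FieldInvolution

variable {K : Type*} [Field K] {φ : K →+* K}

theorem exists_ne_zero_map_eq_neg (hφ : Function.Involutive φ) (hφ1 : φ ≠ RingHom.id K) :
    ∃ d ≠ 0, φ d = -d := by
  obtain ⟨a, ha⟩ := DFunLike.ne_iff.1 hφ1
  exact ⟨φ a - a, sub_ne_zero.2 ha, by rw [map_sub, hφ, neg_sub]⟩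

theorem exists_mul_map_eq_one_sq_ne_one (hφ : Function.Involutive φ) (hφ1 : φ ≠ RingHom.id K)
    (h2 : (2 : K) ≠ 0) : ∃ ζ : K, ζ * φ ζ = 1 ∧ ζ ^ 2 ≠ 1 := by
  obtain ⟨d, hd0, hd⟩ := exists_ne_zero_map_eq_neg hφ hφ1
  have hne {c : K} (hc : φ c = c) : c ≠ d := by
    rintro rfl
    exact mul_ne_zero h2 hd0 (by linear_combination hd - hc)
  have hsub : 1 - d ≠ 0 := sub_ne_zero.2 (hne (map_one φ))
  have hadd : 1 + d ≠ 0 := fun h => hne (c := -1) (by simp) (by linear_combination -h)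
  refine ⟨(1 + d) / (1 - d), ?_, fun h => ?_⟩
  · rw [map_div₀, map_add, map_sub, map_one, hd, sub_neg_eq_add, ← sub_eq_add_neg]
    field_simp
  · field_simp at h
    exact mul_ne_zero (mul_ne_zero h2 h2) hd0 (by linear_combination h)

theorem exists_ne_zero_mul_map_ne_one (hφ : Function.Involutive φ) (hφ1 : φ ≠ RingHom.id K)
    (h2 : (2 : K) ≠ 0) : ∃ t : K, t ≠ 0 ∧ t * φ t ≠ 1 := by
  obtain ⟨d, hd0, hd⟩ := exists_ne_zero_map_eq_neg hφ hφ1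
  by_contra! h
  have hd1 := h d hd0
  have hadd : 1 + d ≠ 0 := fun h0 => h2 (by linear_combination (1 - d) * h0 - hd1 + d * hd)
  have hadd1 := h (1 + d) hadd
  rw [map_add, map_one] at hadd1
  exact one_ne_zero (α := K) (by linear_combination hadd1 - hd1 - hd)

end FieldInvolution

section Spreads

variable {K : Type*} [Field K] {φ : K →+* K}

theorem hermForm_add_smul_single_self {ι : Type*} [Fintype ι] [DecidableEq ι] {b : ι → K} {k : ι}
    (hb : b k = 0) (t : K) :
    hermForm φ (b + t • Pi.single k 1) (b + t • Pi.single k 1) = hermForm φ b b + t * φ t := by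
  simp only [map_add, LinearMap.add_apply, map_smulₛₗ, LinearMap.smul_apply, smul_eq_mul,
    RingHom.id_apply, hermForm_single_left, hermForm_single_right, hb, map_zero, map_one,
    Pi.single_eq_same]
  ring

theorem exists_hermForm_self_ne_zero (hφ : Function.Involutive φ) (hφ1 : φ ≠ RingHom.id K)
    (h2 : (2 : K) ≠ 0) {ι : Type*} [Fintype ι] {i j k : ι} (hij : i ≠ j) (hik : i ≠ k)
    (hjk : j ≠ k) :
    ∃ a : ι → K, a i = 0 ∧ a j = 1 ∧ (∀ m ≠ i, a m ≠ 0) ∧ hermForm φ a a ≠ 0 := by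
  classical
  set b : ι → K := 1 - Pi.single i 1 - Pi.single k 1 with hb
  have hbk : b k = 0 := by simp [hb, hik.symm]
  obtain ⟨t, ht0, ht⟩ : ∃ t : K, t ≠ 0 ∧ hermForm φ b b + t * φ t ≠ 0 := by
    obtain ⟨t, ht0, ht1⟩ := exists_ne_zero_mul_map_ne_one hφ hφ1 h2
    by_contra! h
    refine ht1 ?_
    have h1 := h 1 one_ne_zero
    rw [map_one] at h1
    linear_combination h t ht0 - h1
  refine ⟨b + t • Pi.single k 1, by simp [hb, hik], by simp [hb, hij.symm, hjk], fun m hm => ?_,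
    by rwa [hermForm_add_smul_single_self hbk]⟩
  rcases eq_or_ne m k with rfl | hmk
  · simpa [hbk] using ht0
  · simp [hb, hm, hmk]

variable {n : ℕ}

theorem exists_isSpread (hφ : Function.Involutive φ) (hφ1 : φ ≠ RingHom.id K) (h2 : (2 : K) ≠ 0)
    {i j k : Fin n} (hij : i ≠ j) (hik : i ≠ k) (hjk : j ≠ k) :
    ∃ y ∈ GUgrp n φ, IsSpread y.val i j := by
  obtain ⟨ζ, hζ, hζ2⟩ := exists_mul_map_eq_one_sq_ne_one hφ hφ1 h2
  obtain ⟨a, hai, haj, ha, hN⟩ := exists_hermForm_self_ne_zero hφ hφ1 h2 hij hik hjk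
  obtain ⟨y, hy, hyx⟩ := exists_quasiReflection hφ hN hζ
  have happly (s l : Fin n) : y.val s l =
      (Pi.single l 1 : Fin n → K) s + (ζ - 1) / hermForm φ a a * φ (a l) * a s := by
    rw [← col_apply y.val, ← mulVec_single_one, hyx, hermForm_single_right]
    rfl
  have hζ1 : ζ - 1 ≠ 0 := sub_ne_zero.2 fun h => hζ2 (by rw [h, one_pow])
  refine ⟨y, hy, funext fun l => ?_, funext fun l => ?_, fun s hs => ?_⟩
  · rw [row_apply, happly, hai, mul_zero, add_zero, Pi.single_comm]
  · rw [col_apply, happly, hai, map_zero, mul_zero, zero_mul, add_zero]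
  rw [happly, haj, map_one, mul_one]
  rcases eq_or_ne s j with rfl | hsj
  · intro h
    rw [Pi.single_eq_same, haj, mul_one] at h
    have hζN : ζ = 1 - hermForm φ a a := by
      field_simp at h
      linear_combination h
    have hφζ : φ ζ = ζ := by rw [hζN, map_sub, map_one, map_hermForm hφ]
    exact hζ2 (by rw [pow_two, ← hζ, hφζ])
  · rw [Pi.single_eq_of_ne hsj, zero_add]
    exact mul_ne_zero (div_ne_zero hζ1 hN) (ha s hs)

end Spreads

section Conjugators

variable {n : ℕ} {K : Type*} [Field K] {φ : K →+* K}

theorem PermutesBlocks.of_submatrix {ι β : Type*} {b : ι → β} {M : Matrix ι ι K}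
    {c : Equiv.Perm ι} (hb : PermutesBlocks b (M.submatrix c c)) :
    PermutesBlocks (b ∘ c.symm) M := by
  intro k k' j j' hj hk hk'
  refine hb hj ?_ ?_
  · simpa using hk
  · simpa using hk'

theorem exists_mem_GUgrp_conj_eq_submatrix (c : Equiv.Perm (Fin n)) : ∃ w ∈ GUgrp n φ,
    ∀ g : GL (Fin n) K, (w⁻¹ * g * w).val = g.val.submatrix c c := by
  have hperm : ((c⁻¹.permMatrix K).map φ)ᵀ * c⁻¹.permMatrix K = 1 := by
    rw [Equiv.Perm.permMatrix, PEquiv.map_toMatrix, transpose_permMatrix, inv_inv,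
      ← permMatrix_mul, inv_mul_cancel, permMatrix_one]
  obtain ⟨w, hw, hwc⟩ := exists_mem_GUgrp_val_eq hperm
  refine ⟨w, hw, fun g => Matrix.ext fun k j => ?_⟩
  have hmul : w.val * (w⁻¹ * g * w).val = g.val * w.val := by
    rw [← Units.val_mul, ← Units.val_mul]
    group
  rw [hwc, PEquiv.toMatrix_toPEquiv_mul, PEquiv.mul_toMatrix_toPEquiv] at hmul
  simpa only [submatrix_apply, id, Equiv.Perm.inv_def, Equiv.symm_apply_apply, Equiv.symm_symm]
    using congrFun₂ hmul (c k) j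

theorem exists_mem_GUgrp_val_eq_diagonal {v : Fin n → K} (hv : ∀ i, φ (v i) * v i = 1) :
    ∃ d ∈ GUgrp n φ, d.val = diagonal v := by
  refine exists_mem_GUgrp_val_eq ?_
  rw [diagonal_map (map_zero φ), diagonal_transpose, diagonal_mul_diagonal, funext hv]
  exact diagonal_one

theorem PermutesBlocks.of_conj_diagonal {β : Type*} {b : Fin n → β} {g d : GL (Fin n) K}
    {v : Fin n → K} (hd : d.val = diagonal v) (hb : PermutesBlocks b (d⁻¹ * g * d).val) :
    PermutesBlocks b g.val := by
  have hv : ∀ j, v j ≠ 0 := by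
    suffices ∏ j, v j ≠ 0 from fun j => Finset.prod_ne_zero_iff.1 this j (Finset.mem_univ j)
    rw [← det_diagonal, ← hd]
    exact ((isUnit_iff_isUnit_det _).1 d.isUnit).ne_zero
  have happly {k j : Fin n} (h : g.val k j ≠ 0) : (d⁻¹ * g * d).val k j ≠ 0 := by
    have hmul : d * (d⁻¹ * g * d) = g * d := by group
    have hkj : v k * (d⁻¹ * g * d).val k j = g.val k j * v j := by
      rw [← diagonal_mul, ← mul_diagonal, ← hd, ← Units.val_mul d, hmul, Units.val_mul g]
    exact right_ne_zero_of_mul (hkj ▸ mul_ne_zero h (hv j))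
  exact fun k k' j j' hj hk hk' => hb hj (happly hk) (happly hk')

theorem map_det_mul_det {g : GL (Fin n) K} (hg : g ∈ GUgrp n φ) :
    φ g.val.det * g.val.det = 1 := by
  have hgg : (g.val.map φ)ᵀ * g.val = 1 := hg
  simpa only [det_mul, det_transpose, det_one, ← RingHom.mapMatrix_apply, ← RingHom.map_det]
    using congrArg det hgg

theorem exists_mem_GUgrp_inf_SLsub [Nonempty (Fin n)] {s : GL (Fin n) K} (hs : s ∈ GUgrp n φ) :
    ∃ s' ∈ GUgrp n φ ⊓ SLsub n K, ∀ (g : GL (Fin n) K) {β : Type*} (b : Fin n → β),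
      PermutesBlocks b (s'⁻¹ * g * s').val → PermutesBlocks b (s⁻¹ * g * s).val := by
  have hdet := map_det_mul_det hs
  let i := Classical.arbitrary (Fin n)
  obtain ⟨d, hd, hdv⟩ := exists_mem_GUgrp_val_eq_diagonal (φ := φ)
    (v := Function.update 1 i s.val.det⁻¹) fun k => by
      rcases eq_or_ne k i with rfl | hk
      · rw [Function.update_self, map_inv₀, ← mul_inv, hdet, inv_one]
      · rw [Function.update_of_ne hk, Pi.one_apply, map_one, one_mul]
  refine ⟨s * d, ⟨mul_mem hs hd, ?_⟩, fun g β b hb => ?_⟩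
  · change (s * d).val.det = 1
    rw [Units.val_mul, det_mul, hdv, det_diagonal, Finset.prod_update_of_mem (Finset.mem_univ i)]
    simpa using mul_inv_cancel₀ (right_ne_zero_of_mul_eq_one hdet)
  · refine PermutesBlocks.of_conj_diagonal hdv ?_
    convert hb using 2
    group

end Conjugators

section FiniteField

variable {K : Type*} [Field K] [Fintype K] {q : ℕ} {φ : K →+* K}

theorem involutive_of_forall_eq_pow (hcard : Fintype.card K = q ^ 2) (hφ : ∀ x, φ x = x ^ q) :
    Function.Involutive φ := fun x => by
  rw [hφ, hφ, ← pow_mul, ← pow_two, ← hcard, FiniteField.pow_card]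

theorem ne_id_of_forall_eq_pow (hcard : Fintype.card K = q ^ 2) (hφ : ∀ x, φ x = x ^ q) :
    φ ≠ RingHom.id K := by
  rintro rfl
  have hq1 : 1 < q := by
    have hK : 1 < q ^ 2 := hcard ▸ Fintype.one_lt_card
    exact lt_of_pow_lt_pow_left₀ 2 q.zero_le (by rwa [one_pow])
  have hpow (x : Kˣ) : x ^ (q - 1) = 1 := by
    refine Units.ext (mul_right_cancel₀ x.ne_zero ?_)
    rw [Units.val_pow_eq_pow_val, ← pow_succ, Nat.sub_add_cancel hq1.le, ← hφ, Units.val_one,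
      one_mul, RingHom.id_apply]
  have hle := Nat.le_of_dvd (Nat.sub_pos_of_lt hq1)
    ((FiniteField.forall_pow_eq_one_iff K (q - 1)).1 hpow)
  rw [hcard] at hle
  have hlt : q < q ^ 2 := lt_self_pow₀ hq1 one_lt_two
  omega

theorem natCast_ne_zero_of_card_eq_pow {p k m : ℕ} (hp : p.Prime)
    (hcard : Fintype.card K = p ^ k) (hm : ¬ p ∣ m) : (m : K) ≠ 0 := by
  have : Fact p.Prime := ⟨hp⟩
  have : CharP K p := charP_of_card_eq_prime_pow hcard
  exact (CharP.cast_eq_zero_iff K p m).not.2 hm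

end FiniteField

theorem IsHallSubgroupIn.not_dvd_card {G : Type*} [Group G] {π : Set ℕ} {Γ H : Subgroup G}
    (hH : IsHallSubgroupIn π Γ H) {r : ℕ} (hr : r.Prime) (hrπ : r ∉ π) : ¬ r ∣ Nat.card H :=
  fun h => hrπ (hH.2.1 r hr h)

section ScalarIntersection

variable {n : ℕ} {K : Type*} [Field K] {φ : K →+* K} {H : Subgroup (GL (Fin n) K)}

theorem exists_inf_conjBy_scalar_of_permutesBlocks (hn : 3 ≤ n) (hφ : Function.Involutive φ)
    (hφ1 : φ ≠ RingHom.id K) (h2 : (2 : K) ≠ 0) (hH : ∀ g ∈ H, PermutesBlocks pairIndex g.val) :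
    ∃ x ∈ GUgrp n φ ⊓ SLsub n K, ∃ y ∈ GUgrp n φ ⊓ SLsub n K, ∃ z ∈ GUgrp n φ ⊓ SLsub n K,
      ∀ g ∈ H ⊓ conjBy H x ⊓ conjBy H y ⊓ conjBy H z, ∃ c : K, g.val = c • 1 := by
  obtain ⟨m, rfl⟩ := Nat.exists_eq_add_of_le' hn
  have h02 : (0 : Fin (m + 3)) ≠ 2 := Fin.ne_of_val_ne two_ne_zero.symm
  have h12 : (1 : Fin (m + 3)) ≠ 2 := Fin.ne_of_val_ne (Nat.succ_ne_self 1).symm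
  obtain ⟨w, hw, hwg⟩ := exists_mem_GUgrp_conj_eq_submatrix (φ := φ) (finRotate (m + 3))
  obtain ⟨y, hy, hy01⟩ := exists_isSpread hφ hφ1 h2 zero_ne_one h02 h12
  obtain ⟨z, hz, hz10⟩ := exists_isSpread hφ hφ1 h2 one_ne_zero h12 h02
  obtain ⟨w', hw', hww'⟩ := exists_mem_GUgrp_inf_SLsub hw
  obtain ⟨y', hy', hyy'⟩ := exists_mem_GUgrp_inf_SLsub hy
  obtain ⟨z', hz', hzz'⟩ := exists_mem_GUgrp_inf_SLsub hz
  refine ⟨w'⁻¹, inv_mem hw', y'⁻¹, inv_mem hy', z'⁻¹, inv_mem hz', ?_⟩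
  rintro g ⟨⟨⟨hg, hgw⟩, hgy⟩, hgz⟩
  have hconj {s : GL (Fin (m + 3)) K} (hs : g ∈ conjBy H s⁻¹) :
      PermutesBlocks pairIndex (s⁻¹ * g * s).val :=
    hH _ (by simpa only [inv_inv] using mem_conjBy.1 hs)
  have hshifted : PermutesBlocks shiftedPairIndex g.val :=
    PermutesBlocks.of_submatrix (hwg g ▸ hww' g _ (hconj hgw))
  exact eq_smul_one_of_permutesBlocks (hH g hg) hshifted hy01 (hyy' g _ (hconj hgy)) hz10
    (hzz' g _ (hconj hgz))

theorem conjBy_le {G : Type*} [Group G] {H Γ : Subgroup G} (hH : H ≤ Γ) {x : G} (hx : x ∈ Γ) :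
    conjBy H x ≤ Γ :=
  Subgroup.map_le_iff_le_comap.2 fun _ hh => mul_mem (mul_mem (inv_mem hx) (hH hh))
    (inv_mem (inv_mem hx))

theorem card_conjBy {G : Type*} [Group G] (H : Subgroup G) (x : G) :
    Nat.card (conjBy H x) = Nat.card H :=
  Subgroup.card_map_of_injective (MulAut.conj x⁻¹).injective

theorem isSolvable_conjBy {G : Type*} [Group G] (H : Subgroup G) [Group.IsSolvable H] (x : G) :
    Group.IsSolvable (conjBy H x) :=
  Group.isSolvable_of_surjective (f := (MulAut.conj x⁻¹).toMonoidHom.subgroupMap H)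
    (MonoidHom.subgroupMap_surjective _ H)

theorem conj_mem_conjBy_conjBy {G : Type*} [Group G] {H : Subgroup G} {γ x g : G} :
    γ⁻¹ * g * γ ∈ conjBy (conjBy H γ) x ↔ g ∈ conjBy H (γ * x * γ⁻¹) := by
  simp only [mem_conjBy, _root_.mul_inv_rev, inv_inv, mul_assoc]

theorem conj_mem_GUgrp_inf_SLsub {γ s : GL (Fin n) K} (hγ : γ ∈ GUgrp n φ)
    (hs : s ∈ GUgrp n φ ⊓ SLsub n K) : γ * s * γ⁻¹ ∈ GUgrp n φ ⊓ SLsub n K := by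
  refine ⟨(GUgrp n φ).mul_mem (mul_mem hγ hs.1) (inv_mem hγ), ?_⟩
  have hdet : s.val.det = 1 := hs.2
  change (γ * s * γ⁻¹).val.det = 1
  rw [Units.val_mul, Units.val_mul, det_units_conj, hdet]

theorem val_eq_smul_one_of_conj {γ g : GL (Fin n) K} {c : K} (h : (γ⁻¹ * g * γ).val = c • 1) :
    g.val = c • 1 :=
  calc g.val = (γ * (γ⁻¹ * g * γ) * γ⁻¹).val := by group
    _ = c • 1 := by
      rw [Units.val_mul, Units.val_mul, h, Matrix.mul_smul, mul_one, Matrix.smul_mul, γ.mul_inv]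

theorem stmt6_general (hn : 3 ≤ n) (hφ : Function.Involutive φ) (hφ1 : φ ≠ RingHom.id K)
    (h2 : (2 : K) ≠ 0) (hH : H ≤ GUgrp n φ) [Group.IsSolvable H]
    (hodd : ¬ 2 ∣ H.relIndex (GUgrp n φ)) (h3 : ¬ 3 ∣ Nat.card H) (hK : (Nat.card H : K) ≠ 0) :
    ∃ x ∈ GUgrp n φ ⊓ SLsub n K, ∃ y ∈ GUgrp n φ ⊓ SLsub n K, ∃ z ∈ GUgrp n φ ⊓ SLsub n K,
      ∀ g ∈ H ⊓ conjBy H x ⊓ conjBy H y ⊓ conjBy H z, ∃ c : K, g.val = c • 1 := by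
  obtain ⟨γ, hγ, hT⟩ := exists_le_conjBy_of_isPGroup
    (isPGroup_signedPairPerms.to_le inf_le_left) inf_le_right hodd
  have hsolv := isSolvable_conjBy H γ
  rw [← card_conjBy H γ] at h3 hK
  have hdep : RootPathsDependent φ (conjBy H γ) := rootPathsDependent hφ h2 h3 hK
  have hblocks (g : GL (Fin n) K) (hg : g ∈ conjBy H γ) : PermutesBlocks pairIndex g.val :=
    permutesBlocks_pairIndex hφ h2 (conjBy_le hH hγ) hT hdep hg
  obtain ⟨x, hx, y, hy, z, hz, hxyz⟩ :=
    exists_inf_conjBy_scalar_of_permutesBlocks hn hφ hφ1 h2 hblocks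
  refine ⟨_, conj_mem_GUgrp_inf_SLsub hγ hx, _, conj_mem_GUgrp_inf_SLsub hγ hy, _,
    conj_mem_GUgrp_inf_SLsub hγ hz, ?_⟩
  rintro g ⟨⟨⟨hg, hgx⟩, hgy⟩, hgz⟩
  have hg' : γ⁻¹ * g * γ ∈ conjBy H γ := mem_conjBy.2 (by simpa [mul_assoc] using hg)
  obtain ⟨c, hc⟩ := hxyz (γ⁻¹ * g * γ) ⟨⟨⟨hg', conj_mem_conjBy_conjBy.2 hgx⟩,
    conj_mem_conjBy_conjBy.2 hgy⟩, conj_mem_conjBy_conjBy.2 hgz⟩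
  exact ⟨c, val_eq_smul_one_of_conj hc⟩

end ScalarIntersection

theorem stmt6 (p f q n : ℕ) (hp : p.Prime) (hf : 1 ≤ f) (hq : q = p ^ f)
    (K : Type) [Field K] [Fintype K] (hcard : Fintype.card K = q ^ 2)
    (φ : K →+* K) (hφ : ∀ x : K, φ x = x ^ q)
    (hn : 3 ≤ n) (hnonsolv : ¬ IsSolvable ↥(GUgrp n φ))
    (π : Set ℕ) (hπ : ∀ r ∈ π, r.Prime) (h2pi : 2 ∈ π) (h3pi : 3 ∉ π) (hppi : p ∉ π)
    (H : Subgroup (GL (Fin n) K)) (hH : IsHallSubgroupIn π (GUgrp n φ) H)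
    (hsolv : IsSolvable ↥H)
    :
    ∃ x y z : GL (Fin n) K,
      x ∈ (H : Set (GL (Fin n) K)) * ((GUgrp n φ ⊓ SLsub n K : Subgroup (GL (Fin n) K)) : Set (GL (Fin n) K)) ∧
      y ∈ (H : Set (GL (Fin n) K)) * ((GUgrp n φ ⊓ SLsub n K : Subgroup (GL (Fin n) K)) : Set (GL (Fin n) K)) ∧
      z ∈ (H : Set (GL (Fin n) K)) * ((GUgrp n φ ⊓ SLsub n K : Subgroup (GL (Fin n) K)) : Set (GL (Fin n) K)) ∧
    ∀ g ∈ H ⊓ conjBy H x ⊓ conjBy H y ⊓ conjBy H z,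
      ∃ c : K, (g : Matrix (Fin n) (Fin n) K) = c • (1 : Matrix (Fin n) (Fin n) K) := by
  have : Group.IsSolvable H := hsolv
  have hK {m : ℕ} (hm : ¬ p ∣ m) : (m : K) ≠ 0 :=
    natCast_ne_zero_of_card_eq_pow hp (by rw [hcard, hq, pow_mul]) hm
  have hp2 : ¬ p ∣ 2 := (Nat.prime_dvd_prime_iff_eq hp Nat.prime_two).not.2 fun h => hppi (h ▸ h2pi)
  obtain ⟨x, hx, y, hy, z, hz, hxyz⟩ := stmt6_general hn (involutive_of_forall_eq_pow hcard hφ)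
    (ne_id_of_forall_eq_pow hcard hφ) (by exact_mod_cast hK hp2) hH.1 (hH.2.2 2 h2pi)
    (hH.not_dvd_card Nat.prime_three h3pi) (hK (hH.not_dvd_card hp hppi))
  have hHSU := Set.subset_mul_right ((GUgrp n φ ⊓ SLsub n K : Subgroup _) : Set _) H.one_mem
  exact ⟨x, y, z, hHSU hx, hHSU hy, hHSU hz, hxyz⟩
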